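/- There exist universal constants c > 0 and n₀ such that for all n ≥ n₀, r ≥ 1, real p ≥ 2, and k with n·r ≤ k ≤ n²: if a randomized t-round adaptive algorithm making k exact linear measurements per round is such that for every n×n real matrix A it outputs a matrix B of rank at most r satisfying ‖A − B‖_{S_p} ≤ 2·min{‖A − X‖_{S_p} : rank(X) ≤ r} with probability at least 99/100 (over the seed), then t ≥ c·log(n²/k)/(1 + (1/p)·log n + log log n). -/

import Mathlib

/-!
The hard inputs are `A = α u vᵀ + G`, where `u, v` are independent uniform sign vectors, `G` is a
standard Gaussian matrix and `α² n` is a constant multiple of `n ^ (2 / p)`. It suffices to bound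
the success probability of every deterministic algorithm, on average over `u, v, G`.

Success reveals the plant. The plant has rank one, so it competes in the minimum and leaves only
`G`, whose operator norm is at most `8 √n` (`gau_opNorm`). Since the Schatten norm lies between the
operator norm and `n ^ (1 / p)` times the operator norm, a successful output `B` has `B v` close to
`α n u` (`close_of_success`). A fixed matrix of rank at most `n / 8` is that close to a fraction
`exp (-n / 8)` of the plants only (`avg_output`).

Each round learns little. The queries are orthonormal, also across rounds, so on a pure noise input
all responses are independent standard Gaussians, and on the planted input the transcript has an
explicit Gaussian density with respect to this null law (`QueryMaps.lintegral_resp`; the proof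
swaps the queried component of `G` with a fresh Gaussian vector). Call the squared norm of the
image of `u ⊗ v` under the query matrix of a round its energy. As long as the total energy of the
past rounds is at most `T / α²`, the likelihood ratio has second moment at most `exp T`, and an
event of prior probability `exp (-L)` under the null law has probability at most
`2 exp ((T - L) / 2)` on the planted input (`QueryMaps.avg_change_of_measure`). For fixed queries
the energy exceeds `τ` with prior probability at most `exp (k / (2 n) - τ / (8 n))`
(`avg_query_tail`), by an exponential moment in which the signs are compared with Gaussians. Hence
with high probability round `j` has energy at most `k R ^ (j + 1)`, where
`R = growth n p = 163840 n ^ (2 / p)`, and if `k R ^ (t + 1) ≤ n²` the output event is unlikely as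
well (`QueryMaps.avg_success`, `per_seed`).

So success forces `n² < k R ^ (t + 1)` (`growth_bound`). As at least one round is needed
(`rounds_pos`), taking logarithms gives the bound with `c = 1 / 26` and `n₀ = 200`, the `log log n`
term being nonnegative.
-/

open MeasureTheory ProbabilityTheory Matrix
open scoped ENNReal Classical

noncomputable section

/-- Squared Euclidean norm of a finitely-indexed real vector. -/
def sqNorm {ι : Type*} [Fintype ι] (x : ι → ℝ) : ℝ := ∑ i, x i ^ 2

/-- Squared Frobenius norm of a real matrix. -/
def frobSq {m n : Type*} [Fintype m] [Fintype n] (A : Matrix m n ℝ) : ℝ :=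
  ∑ i, ∑ j, A i j ^ 2

/-- Spectral (ℓ₂ operator) norm of a real matrix. -/
def specNorm {m n : Type*} [Fintype m] [Fintype n] (A : Matrix m n ℝ) : ℝ :=
  sSup ((fun x : n → ℝ => Real.sqrt (sqNorm (A.mulVec x))) '' {x | sqNorm x ≤ 1})

/-- `i`-th largest singular value (1-based), characterized via
`σ_i(A) = min {‖A − X‖ : rank X ≤ i − 1}`. -/
def singVal {m n : Type*} [Fintype m] [Fintype n] (A : Matrix m n ℝ) (i : ℕ) : ℝ :=
  sInf {c | ∃ X : Matrix m n ℝ, X.rank ≤ i - 1 ∧ c = specNorm (A - X)}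

/-- Flattening of an `n × n` matrix into a vector in `ℝ^{n²}`. -/
def vec (n : ℕ) (A : Matrix (Fin n) (Fin n) ℝ) : Fin (n * n) → ℝ :=
  fun i => A (finProdFinEquiv.symm i).1 (finProdFinEquiv.symm i).2

/-- `u ⊗ v = vec (u vᵀ) ∈ ℝ^{n²}`. -/
def tensor {n : ℕ} (u v : Fin n → ℝ) : Fin (n * n) → ℝ :=
  vec n (Matrix.of fun i j => u i * v j)

/-- Standard Gaussian measure on `ι → ℝ`. -/
def stdGaussian (ι : Type*) [Fintype ι] : Measure (ι → ℝ) :=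
  Measure.pi fun _ => gaussianReal 0 1

/-- Standard Gaussian measure on `n × n` matrices (as `Fin n → Fin n → ℝ`). -/
def stdGaussianMat (n : ℕ) : Measure (Fin n → Fin n → ℝ) :=
  Measure.pi fun _ => stdGaussian (Fin n)

/-- Query maps of a deterministic `t`-round adaptive algorithm making `k` linear
measurements per round on inputs in `ℝ^N`. -/
def QueryMaps (N k t : ℕ) : Type :=
  (j : Fin t) → (Fin (j : ℕ) → (Fin k → ℝ)) → Matrix (Fin k) (Fin N) ℝ

namespace QueryMaps

variable {N k t : ℕ}

/-- Restriction of a round-`j` history to the first `i` rounds. -/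
def prefixHist {j : Fin t} (h : Fin (j : ℕ) → Fin k → ℝ) {i : Fin t}
    (hij : (i : ℕ) < (j : ℕ)) : Fin (i : ℕ) → Fin k → ℝ :=
  fun l => h ⟨l.1, l.isLt.trans hij⟩

/-- Validity of query maps: measurability, orthonormal rows within each round, and
orthogonality across rounds along consistent histories. -/
def Valid (Q : QueryMaps N k t) : Prop :=
  (∀ (j : Fin t) (i : Fin k) (l : Fin N), Measurable fun h => Q j h i l) ∧
  (∀ (j : Fin t) (h : Fin (j : ℕ) → Fin k → ℝ), Q j h * (Q j h)ᵀ = 1) ∧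
  (∀ (j i : Fin t) (hij : (i : ℕ) < (j : ℕ)) (h : Fin (j : ℕ) → Fin k → ℝ),
      Q j h * (Q i (prefixHist h hij))ᵀ = 0)

/-- Responses of the algorithm under exact linear measurements of `a`. -/
def resp (Q : QueryMaps N k t) (a : Fin N → ℝ) (j : Fin t) : Fin k → ℝ :=
  (Q j fun i => resp Q a ⟨i.1, i.isLt.trans j.isLt⟩).mulVec a
termination_by (j : ℕ)
decreasing_by exact i.isLt

/-- Responses of the algorithm under noisy linear measurements of `a`, with fresh
per-round noise `g`. -/
def nresp (Q : QueryMaps N k t) (a : Fin N → ℝ) (g : Fin t → Fin k → ℝ) (j : Fin t) :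
    Fin k → ℝ :=
  ((Q j fun i => nresp Q a g ⟨i.1, i.isLt.trans j.isLt⟩).mulVec a) + g j
termination_by (j : ℕ)
decreasing_by exact i.isLt

/-- The `tk × N` matrix stacking all the query matrices realized along the run of the
algorithm on input `a` (exact measurements). -/
def runMat (Q : QueryMaps N k t) (a : Fin N → ℝ) : Matrix (Fin t × Fin k) (Fin N) ℝ :=
  Matrix.of fun p l =>
    Q p.1 (fun i => resp Q a ⟨i.1, i.isLt.trans p.1.isLt⟩) p.2 l

end QueryMaps

/-- Kullback–Leibler divergence, valued in `[0, ∞]`, defined with the natural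
logarithm. -/
def klDiv {Ω : Type*} [MeasurableSpace Ω] (P Q : Measure Ω) : ℝ≥0∞ :=
  if P ≪ Q ∧ Integrable (fun x => Real.log ((P.rnDeriv Q x).toReal)) P then
    ENNReal.ofReal (∫ x, Real.log ((P.rnDeriv Q x).toReal) ∂P)
  else ⊤


/-- The rank-`r` plant `Σ_{i=1}^r uᵢ vᵢᵀ` built from the rows of `U` and `V`. -/
def plant {n r : ℕ} (U V : Fin r → Fin n → ℝ) : Matrix (Fin n) (Fin n) ℝ :=
  Matrix.of fun i j => ∑ l, U l i * V l j

/-- Schatten-`p` norm (real `p`), via the singular values. -/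
def schattenNorm {n : ℕ} (p : ℝ) (A : Matrix (Fin n) (Fin n) ℝ) : ℝ :=
  (∑ i ∈ Finset.range n, singVal A (i + 1) ^ p) ^ (1 / p)

/-- Ky-Fan `p` norm: sum of the `p` largest singular values. -/
def kyFanNorm {n : ℕ} (p : ℕ) (A : Matrix (Fin n) (Fin n) ℝ) : ℝ :=
  ∑ i ∈ Finset.range p, singVal A (i + 1)

/-! ### Gaussian integrals -/

/-- The standard Gaussian measure on `ι → ℝ`, under a name that does not clash with
`ProbabilityTheory.stdGaussian`. -/
def gau (ι : Type*) [Fintype ι] : Measure (ι → ℝ) := Measure.pi fun _ => gaussianReal 0 1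

instance {ι : Type*} [Fintype ι] : IsProbabilityMeasure (gau ι) := by
  unfold gau; infer_instance

lemma lintegral_gau_prod {ι : Type*} [Fintype ι] (f : ι → ℝ → ℝ≥0∞)
    (hf : ∀ i, Measurable (f i)) :
    ∫⁻ x, ∏ i, f i (x i) ∂gau ι = ∏ i, ∫⁻ y, f i y ∂gaussianReal 0 1 := by
  have hind : iIndepFun (fun (i : ι) (x : ι → ℝ) => f i (x i)) (gau ι) :=
    iIndepFun_pi (X := f) (fun i => (hf i).aemeasurable)
  rw [gau] at hind ⊢
  rw [lintegral_prod_eq_prod_lintegral_of_indepFun Finset.univ _ hind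
    (fun i => (hf i).comp (measurable_pi_apply i))]
  refine Finset.prod_congr rfl fun i _ => ?_
  exact (measurePreserving_eval (fun _ : ι => gaussianReal 0 1) i).lintegral_comp (hf i)

lemma lintegral_exp_mul_gaussian (c : ℝ) :
    ∫⁻ y, ENNReal.ofReal (Real.exp (c * y)) ∂gaussianReal 0 1
      = ENNReal.ofReal (Real.exp (c ^ 2 / 2)) := by
  rw [← ofReal_integral_eq_lintegral_ofReal (integrable_exp_mul_gaussianReal c)
    (Filter.Eventually.of_forall fun _ => (Real.exp_pos _).le)]
  have := congrFun (mgf_id_gaussianReal (μ := 0) (v := 1)) c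
  simp only [mgf, id] at this
  rw [this]; simp

lemma ofReal_exp_sum {ι : Type*} (s : Finset ι) (f : ι → ℝ) :
    ENNReal.ofReal (Real.exp (∑ i ∈ s, f i)) = ∏ i ∈ s, ENNReal.ofReal (Real.exp (f i)) := by
  rw [Real.exp_sum, ENNReal.ofReal_prod_of_nonneg fun _ _ => (Real.exp_pos _).le]

lemma lintegral_exp_linear {ι : Type*} [Fintype ι] (c : ι → ℝ) :
    ∫⁻ x, ENNReal.ofReal (Real.exp (∑ i, c i * x i)) ∂gau ι
      = ENNReal.ofReal (Real.exp (sqNorm c / 2)) := by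
  simp_rw [ofReal_exp_sum]
  rw [lintegral_gau_prod (fun i y => ENNReal.ofReal (Real.exp (c i * y))) (by fun_prop)]
  simp_rw [lintegral_exp_mul_gaussian, sqNorm, Finset.sum_div, ofReal_exp_sum]

lemma lintegral_exp_sq_gaussian {l : ℝ} (h0 : 0 ≤ l) (h1 : l ≤ 1 / 2) :
    ∫⁻ y, ENNReal.ofReal (Real.exp (l * y ^ 2 / 2)) ∂gaussianReal 0 1
      ≤ ENNReal.ofReal (Real.exp l) := by
  rw [gaussianReal_of_var_ne_zero _ one_ne_zero,
    lintegral_withDensity_eq_lintegral_mul _ (measurable_gaussianPDF _ _) (by fun_prop)]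
  have hb : 0 < (1 - l) / 2 := by linarith
  have key : ∀ y : ℝ, (gaussianPDF 0 1 * fun y => ENNReal.ofReal (Real.exp (l * y ^ 2 / 2))) y
      = ENNReal.ofReal ((√(2 * Real.pi))⁻¹ * Real.exp (-((1 - l) / 2) * y ^ 2)) := by
    intro y
    simp only [Pi.mul_apply, gaussianPDF, gaussianPDFReal]
    rw [← ENNReal.ofReal_mul (by positivity), mul_assoc, ← Real.exp_add]
    congr 3
    · simp
    · simp; ring
  simp_rw [key]
  rw [← ofReal_integral_eq_lintegral_ofReal ((integrable_exp_neg_mul_sq hb).const_mul _)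
    (Filter.Eventually.of_forall fun _ => by positivity), integral_const_mul, integral_gaussian]
  apply ENNReal.ofReal_le_ofReal
  rw [← Real.sqrt_inv, ← Real.sqrt_mul (by positivity)]
  apply Real.sqrt_le_iff.2 ⟨(Real.exp_pos _).le, ?_⟩
  have h2 : (2 * Real.pi)⁻¹ * (Real.pi / ((1 - l) / 2)) = 1 / (1 - l) := by
    have := Real.pi_pos.ne'
    have : (1 - l) ≠ 0 := by linarith
    field_simp
  rw [h2, ← Real.exp_nat_mul, div_le_iff₀ (by linarith)]
  have := Real.add_one_le_exp ((2 : ℕ) * l)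
  push_cast at *
  nlinarith

lemma lintegral_exp_diag {ι : Type*} [Fintype ι] (l : ι → ℝ) (h0 : ∀ i, 0 ≤ l i)
    (h1 : ∀ i, l i ≤ 1 / 2) :
    ∫⁻ x, ENNReal.ofReal (Real.exp (∑ i, l i * x i ^ 2 / 2)) ∂gau ι
      ≤ ENNReal.ofReal (Real.exp (∑ i, l i)) := by
  simp_rw [ofReal_exp_sum]
  rw [lintegral_gau_prod (fun i y => ENNReal.ofReal (Real.exp (l i * y ^ 2 / 2))) (by fun_prop)]
  exact Finset.prod_le_prod' fun i _ => lintegral_exp_sq_gaussian (h0 i) (h1 i)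

lemma lintegral_shift_gaussian (c : ℝ) (f : ℝ → ℝ≥0∞) (hf : Measurable f) :
    ∫⁻ y, f (c + y) ∂gaussianReal 0 1
      = ∫⁻ y, f y * ENNReal.ofReal (Real.exp (c * y - c ^ 2 / 2)) ∂gaussianReal 0 1 := by
  have h1 : ∫⁻ y, f (c + y) ∂gaussianReal 0 1 = ∫⁻ y, f y ∂gaussianReal c 1 := by
    rw [← zero_add c, ← gaussianReal_map_const_add, lintegral_map hf (by fun_prop)]; simp
  rw [h1, gaussianReal_of_var_ne_zero _ one_ne_zero, gaussianReal_of_var_ne_zero _ one_ne_zero,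
    lintegral_withDensity_eq_lintegral_mul _ (measurable_gaussianPDF _ _) (by fun_prop),
    lintegral_withDensity_eq_lintegral_mul _ (measurable_gaussianPDF _ _) (by fun_prop)]
  refine lintegral_congr fun y => ?_
  simp only [Pi.mul_apply, gaussianPDF, gaussianPDFReal]
  rw [mul_comm (f y), ← mul_assoc, ← ENNReal.ofReal_mul (by positivity), mul_assoc (√_)⁻¹,
    ← Real.exp_add]
  congr 4
  simp; ring

/-- Cameron–Martin formula in finite dimension. -/
lemma lintegral_shift_gau {ι : Type*} [Fintype ι] (c : ι → ℝ) (f : (ι → ℝ) → ℝ≥0∞)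
    (hf : Measurable f) :
    ∫⁻ x, f (c + x) ∂gau ι
      = ∫⁻ x, f x * ENNReal.ofReal (Real.exp (∑ i, c i * x i - sqNorm c / 2)) ∂gau ι := by
  have hm : Measurable fun x : ι → ℝ =>
      ENNReal.ofReal (Real.exp (∑ i, c i * x i - sqNorm c / 2)) := by fun_prop
  have hmap : (gau ι).map (fun x => c + x) = (gau ι).withDensity
      (fun x => ENNReal.ofReal (Real.exp (∑ i, c i * x i - sqNorm c / 2))) := by
    have e1 : (gau ι).map (fun x => c + x)
        = Measure.pi fun i => (gaussianReal 0 1).map (fun y => c i + y) := by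
      rw [gau, ← Measure.pi_map_pi (fun i => by fun_prop)]; rfl
    rw [e1]
    have : ∀ i, IsProbabilityMeasure ((gaussianReal 0 1).map (fun y => c i + y)) :=
      fun i => Measure.isProbabilityMeasure_map (by fun_prop)
    refine Measure.pi_eq fun s hs => ?_
    rw [withDensity_apply _ (MeasurableSet.univ_pi hs),
      ← lintegral_indicator (MeasurableSet.univ_pi hs)]
    have : ∀ x : ι → ℝ, (Set.univ.pi s).indicator
        (fun x => ENNReal.ofReal (Real.exp (∑ i, c i * x i - sqNorm c / 2))) x
        = ∏ i, (s i).indicator 1 (x i) * ENNReal.ofReal (Real.exp (c i * x i - c i ^ 2 / 2)) := by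
      intro x
      rw [Finset.prod_mul_distrib, ← ofReal_exp_sum, Finset.sum_sub_distrib, ← Finset.sum_div]
      by_cases hx : x ∈ Set.univ.pi s
      · rw [Set.indicator_of_mem hx, Finset.prod_eq_one, one_mul]; · rfl
        intro i _; rw [Set.indicator_of_mem (hx i trivial)]; rfl
      · rw [Set.indicator_of_notMem hx]
        simp only [Set.mem_univ_pi, not_forall] at hx
        obtain ⟨i, hi⟩ := hx
        rw [Finset.prod_eq_zero (Finset.mem_univ i) (by rw [Set.indicator_of_notMem hi]), zero_mul]
    simp_rw [this]
    rw [lintegral_gau_prod (fun i y => (s i).indicator 1 y *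
      ENNReal.ofReal (Real.exp (c i * y - c i ^ 2 / 2)))
      (fun i => (measurable_one.indicator (hs i)).mul (by fun_prop))]
    refine Finset.prod_congr rfl fun i _ => ?_
    rw [← lintegral_shift_gaussian (c i) _ (measurable_one.indicator (hs i)),
      ← lintegral_map (f := (s i).indicator 1) (measurable_one.indicator (hs i)) (by fun_prop),
      lintegral_indicator_one (hs i)]
  rw [← lintegral_map hf (by fun_prop), hmap, lintegral_withDensity_eq_lintegral_mul _ hm hf]
  exact lintegral_congr fun x => by simp [mul_comm]

/-- Orthogonal matrices preserve the standard Gaussian measure. -/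
lemma gau_map_orthogonal {ι : Type*} [Fintype ι] [DecidableEq ι] (O : Matrix ι ι ℝ)
    (hO : Oᵀ * O = 1) : MeasurePreserving (fun x => O *ᵥ x) (gau ι) (gau ι) := by
  have hnorm : ∀ x : EuclideanSpace ℝ ι, ‖O.toEuclideanLin x‖ = ‖x‖ := by
    intro x
    have : ‖O.toEuclideanLin x‖ ^ 2 = ‖x‖ ^ 2 := by
      rw [EuclideanSpace.real_norm_sq_eq, EuclideanSpace.real_norm_sq_eq]
      have h : (O *ᵥ x.ofLp) ⬝ᵥ (O *ᵥ x.ofLp) = x.ofLp ⬝ᵥ x.ofLp := by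
        rw [Matrix.dotProduct_mulVec, ← Matrix.mulVec_transpose, Matrix.mulVec_mulVec, hO,
          Matrix.one_mulVec]
      simpa [dotProduct, pow_two] using h
    exact (sq_eq_sq₀ (norm_nonneg _) (norm_nonneg _)).1 this
  let L : EuclideanSpace ℝ ι →ₗᵢ[ℝ] EuclideanSpace ℝ ι := ⟨O.toEuclideanLin, hnorm⟩
  let e := L.toLinearIsometryEquiv rfl
  have h1 := stdGaussian_map e
  refine ⟨by fun_prop, ?_⟩
  have h2 := map_pi_eq_stdGaussian (ι := ι)
  change (gau ι).map (WithLp.toLp 2) = _ at h2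
  have hof : (ProbabilityTheory.stdGaussian (EuclideanSpace ℝ ι)).map WithLp.ofLp = gau ι := by
    rw [← h2, Measure.map_map (by fun_prop) (by fun_prop)]
    exact Measure.map_id
  have : (fun x => O *ᵥ x) = WithLp.ofLp ∘ (⇑e) ∘ (WithLp.toLp 2 : (ι → ℝ) → EuclideanSpace ℝ ι) := by
    funext x; rfl
  rw [this, ← Measure.map_map (by fun_prop) (by fun_prop),
    ← Measure.map_map (by fun_prop) (by fun_prop), h2, h1, hof]

/-- Swapping the component `QG` of a Gaussian vector `G` with an independent Gaussian vector `g`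
is an orthogonal transformation of the pair `(G, g)`. -/
lemma lintegral_swap {ι κ : Type*} [Fintype ι] [Fintype κ] [DecidableEq ι] [DecidableEq κ]
    (Q : Matrix κ ι ℝ) (hQ : Q * Qᵀ = 1)
    (f : (κ → ℝ) × (ι → ℝ) → ℝ≥0∞) (hf : Measurable f) :
    ∫⁻ g, ∫⁻ G, f (Q *ᵥ G, G + Qᵀ *ᵥ (g - Q *ᵥ G)) ∂gau ι ∂gau κ
      = ∫⁻ g, ∫⁻ G, f (g, G) ∂gau ι ∂gau κ := by
  have hm1 : Measurable fun p : (κ → ℝ) × (ι → ℝ) =>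
      f (Q *ᵥ p.2, p.2 + Qᵀ *ᵥ (p.1 - Q *ᵥ p.2)) := hf.comp (by fun_prop)
  rw [lintegral_lintegral (f := fun g G => f (Q *ᵥ G, G + Qᵀ *ᵥ (g - Q *ᵥ G))) hm1.aemeasurable,
    lintegral_lintegral (f := fun g G => f (g, G)) hf.aemeasurable]
  let O : Matrix (κ ⊕ ι) (κ ⊕ ι) ℝ := fromBlocks 0 Q Qᵀ (1 - Qᵀ * Q)
  have hO : Oᵀ * O = 1 := by
    simp only [O, fromBlocks_transpose, fromBlocks_multiply, transpose_transpose, transpose_zero,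
      transpose_sub, transpose_one, transpose_mul, ← fromBlocks_one]
    congr 1
    · simp [hQ]
    · simp [Matrix.mul_sub, ← Matrix.mul_assoc, hQ]
    · simp [Matrix.sub_mul, Matrix.mul_assoc, hQ]
    · have : Qᵀ * Q * (Qᵀ * Q) = Qᵀ * Q := by
        rw [Matrix.mul_assoc, ← Matrix.mul_assoc Q, hQ, Matrix.one_mul]
      simp [Matrix.sub_mul, Matrix.mul_sub, this]
  have hP := measurePreserving_sumPiEquivProdPi (X := fun _ : κ ⊕ ι => ℝ)
    (fun _ => gaussianReal 0 1)
  have hOP := gau_map_orthogonal O hO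
  have e1 := hP.lintegral_comp hf
  have e2 := hP.lintegral_comp hm1
  have e3 := hOP.lintegral_comp (f := fun z => f (MeasurableEquiv.sumPiEquivProdPi
    (fun _ : κ ⊕ ι => ℝ) z)) (by fun_prop)
  change _ = ∫⁻ z, f z ∂((gau κ).prod (gau ι)) at e1
  change _ = ∫⁻ z, f (Q *ᵥ z.2, z.2 + Qᵀ *ᵥ (z.1 - Q *ᵥ z.2)) ∂((gau κ).prod (gau ι)) at e2
  refine e2.symm.trans (Eq.trans ?_ (e3.trans e1))
  change _ = ∫⁻ z, _ ∂(gau (κ ⊕ ι))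
  refine lintegral_congr fun z => ?_
  congr 1
  ext i
  · simp only [O, MeasurableEquiv.sumPiEquivProdPi, MeasurableEquiv.coe_mk,
      Equiv.sumPiEquivProdPi_apply, mulVec, dotProduct, Fintype.sum_sum_type]
    simp [fromBlocks]
  · have : (O *ᵥ z) (Sum.inr i) = (Qᵀ *ᵥ (fun a => z (Sum.inl a))) i
        + ((1 - Qᵀ * Q) *ᵥ (fun a => z (Sum.inr a))) i := by
      simp only [O, mulVec, dotProduct, Fintype.sum_sum_type, fromBlocks_apply₂₁,
        fromBlocks_apply₂₂]
    change _ = (O *ᵥ z) (Sum.inr i)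
    rw [this, sub_mulVec, one_mulVec, ← mulVec_mulVec]
    simp only [MeasurableEquiv.sumPiEquivProdPi, MeasurableEquiv.coe_mk,
      Equiv.sumPiEquivProdPi_apply, Pi.add_apply, mulVec_sub, Pi.sub_apply]
    ring

/-! ### Transcripts of adaptive algorithms -/

namespace QueryMaps

variable {N k t : ℕ}

/-- The first `j` rounds of a transcript. -/
def hist (r : Fin t → Fin k → ℝ) (j : Fin t) : Fin (j : ℕ) → Fin k → ℝ :=
  fun i => r ⟨i.1, i.isLt.trans j.isLt⟩

lemma resp_eq (Q : QueryMaps N k t) (a : Fin N → ℝ) (j : Fin t) :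
    resp Q a j = Q j (hist (resp Q a) j) *ᵥ a := by
  rw [resp]; rfl

/-- The (constant) query matrix of the first round. -/
def fstQ (Q : QueryMaps N k (t + 1)) : Matrix (Fin k) (Fin N) ℝ :=
  Q 0 (fun i => absurd i.2 (Nat.not_lt_zero _))

/-- The algorithm that remains after the first response `z` has been received. -/
def tailQ (Q : QueryMaps N k (t + 1)) (z : Fin k → ℝ) : QueryMaps N k t :=
  fun j h => Q j.succ (Fin.cons z h : Fin ((j : ℕ) + 1) → Fin k → ℝ)

/-- The first `m` rounds of an algorithm. -/
def trunc (Q : QueryMaps N k t) {m : ℕ} (hm : m ≤ t) : QueryMaps N k m :=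
  fun j h => Q ⟨j.1, j.2.trans_le hm⟩ h

lemma fstQ_eq (Q : QueryMaps N k (t + 1)) (h : Fin ((0 : Fin (t + 1)) : ℕ) → Fin k → ℝ) :
    Q 0 h = fstQ Q := by
  unfold fstQ; congr; funext i; exact absurd i.2 (Nat.not_lt_zero _)

lemma hist_cons_succ (z : Fin k → ℝ) (r : Fin t → Fin k → ℝ) (j : Fin t) :
    hist (Fin.cons z r : Fin (t + 1) → Fin k → ℝ) j.succ
      = (Fin.cons z (hist r j) : Fin ((j : ℕ) + 1) → Fin k → ℝ) := by
  funext i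
  refine Fin.cases ?_ (fun i => ?_) i
  · rfl
  · rfl

lemma resp_succ (Q : QueryMaps N k (t + 1)) (a : Fin N → ℝ) :
    resp Q a = Fin.cons (fstQ Q *ᵥ a) (resp (tailQ Q (fstQ Q *ᵥ a)) a) := by
  have key : ∀ m (hm : m < t + 1), resp Q a ⟨m, hm⟩
      = (Fin.cons (fstQ Q *ᵥ a) (resp (tailQ Q (fstQ Q *ᵥ a)) a) :
          Fin (t + 1) → Fin k → ℝ) ⟨m, hm⟩ := by
    intro m
    induction m using Nat.strong_induction_on with
    | _ m ih =>
      intro hm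
      rcases m with _ | m
      · rw [resp_eq]
        exact congrArg (· *ᵥ a) (fstQ_eq Q _)
      · rw [resp_eq]
        have hm' : m < t := by omega
        change _ = resp (tailQ Q (fstQ Q *ᵥ a)) a ⟨m, hm'⟩
        rw [resp_eq, tailQ]
        have : hist (resp Q a) ⟨m + 1, hm⟩ = (Fin.cons (fstQ Q *ᵥ a)
            (hist (resp (tailQ Q (fstQ Q *ᵥ a)) a) ⟨m, hm'⟩) : Fin (m + 1) → Fin k → ℝ) := by
          rw [← hist_cons_succ]
          funext i
          exact ih i.1 i.2 _
        exact congrArg (fun h => Q ⟨m + 1, hm⟩ h *ᵥ a) this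
  funext j
  exact key j.1 j.2

lemma resp_trunc (Q : QueryMaps N k t) {m : ℕ} (hm : m ≤ t) (a : Fin N → ℝ) :
    resp (trunc Q hm) a = fun j : Fin m => resp Q a ⟨j.1, j.2.trans_le hm⟩ := by
  have key : ∀ l (hl : l < m), resp (trunc Q hm) a ⟨l, hl⟩ = resp Q a ⟨l, hl.trans_le hm⟩ := by
    intro l
    induction l using Nat.strong_induction_on with
    | _ l ih =>
      intro hl
      rw [resp_eq, resp_eq, trunc]
      congr 2
      funext i
      exact ih i.1 i.2 _
  funext j
  exact key j.1 j.2

lemma measurable_resp {Ω : Type*} [MeasurableSpace Ω] (Qf : Ω → QueryMaps N k t)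
    (hQ : ∀ (j : Fin t) (i : Fin k) (l : Fin N),
      Measurable fun p : Ω × (Fin (j : ℕ) → Fin k → ℝ) => Qf p.1 j p.2 i l) :
    Measurable fun p : Ω × (Fin N → ℝ) => resp (Qf p.1) p.2 := by
  have key : ∀ m (hm : m < t),
      Measurable fun p : Ω × (Fin N → ℝ) => resp (Qf p.1) p.2 ⟨m, hm⟩ := by
    intro m
    induction m using Nat.strong_induction_on with
    | _ m ih =>
      intro hm
      simp_rw [resp_eq]
      refine measurable_pi_iff.2 fun i => ?_
      simp only [mulVec, dotProduct]
      refine Finset.measurable_sum _ fun l _ => Measurable.mul ?_ (by fun_prop)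
      refine (hQ ⟨m, hm⟩ i l).comp (measurable_fst.prodMk (measurable_pi_iff.2 fun j => ?_))
      exact ih j.1 j.2 _
  exact measurable_pi_iff.2 fun j => key j.1 j.2

lemma measurable_cons {k m : ℕ} :
    Measurable fun p : (Fin k → ℝ) × (Fin m → Fin k → ℝ) =>
      (Fin.cons p.1 p.2 : Fin (m + 1) → Fin k → ℝ) := by
  refine measurable_pi_iff.2 fun i => ?_
  refine Fin.cases ?_ (fun i => ?_) i
  · simpa using measurable_fst
  · simp only [Fin.cons_succ]; fun_prop

lemma measurable_tailQ (Q : QueryMaps N k (t + 1)) (hQ : Q.Valid) (j : Fin t) (i : Fin k)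
    (l : Fin N) :
    Measurable fun p : (Fin k → ℝ) × (Fin (j : ℕ) → Fin k → ℝ) => tailQ Q p.1 j p.2 i l :=
  (hQ.1 j.succ i l).comp (measurable_cons (m := (j : ℕ)))

lemma Valid.tailQ {Q : QueryMaps N k (t + 1)} (hQ : Q.Valid) (z : Fin k → ℝ) :
    (tailQ Q z).Valid := by
  refine ⟨fun j i l => (measurable_tailQ Q hQ j i l).comp measurable_prodMk_left,
    fun j h => hQ.2.1 _ _, fun j i hij h => ?_⟩
  have := hQ.2.2 j.succ i.succ (Nat.succ_lt_succ hij)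
    (Fin.cons z h : Fin ((j : ℕ) + 1) → Fin k → ℝ)
  have e : prefixHist (j := j.succ) (i := i.succ)
      (Fin.cons z h : Fin ((j : ℕ) + 1) → Fin k → ℝ) (Nat.succ_lt_succ hij)
      = (Fin.cons z (prefixHist h hij) : Fin ((i : ℕ) + 1) → Fin k → ℝ) := by
    funext l
    refine Fin.cases ?_ (fun i => ?_) l
    · rfl
    · rfl
  rw [e] at this
  exact this

lemma Valid.tailQ_fstQ {Q : QueryMaps N k (t + 1)} (hQ : Q.Valid) (z : Fin k → ℝ) (j : Fin t)
    (h : Fin (j : ℕ) → Fin k → ℝ) : QueryMaps.tailQ Q z j h * (fstQ Q)ᵀ = 0 := by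
  have := hQ.2.2 j.succ 0 (Nat.succ_pos _) (Fin.cons z h : Fin ((j : ℕ) + 1) → Fin k → ℝ)
  rwa [fstQ_eq Q] at this

lemma Valid.trunc {Q : QueryMaps N k t} (hQ : Q.Valid) {m : ℕ} (hm : m ≤ t) :
    (trunc Q hm).Valid :=
  ⟨fun j i l => hQ.1 ⟨j.1, j.2.trans_le hm⟩ i l, fun j h => hQ.2.1 ⟨j.1, j.2.trans_le hm⟩ h,
    fun j i hij h => hQ.2.2 ⟨j.1, j.2.trans_le hm⟩ ⟨i.1, i.2.trans_le hm⟩ hij h⟩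

/-- Components orthogonal to all queries do not influence the responses. -/
lemma resp_add_of_orthogonal (Q : QueryMaps N k t) (a b : Fin N → ℝ)
    (hb : ∀ j h, Q j h *ᵥ b = 0) : resp Q (a + b) = resp Q a := by
  have key : ∀ l (hl : l < t), resp Q (a + b) ⟨l, hl⟩ = resp Q a ⟨l, hl⟩ := by
    intro l
    induction l using Nat.strong_induction_on with
    | _ l ih =>
      intro hl
      rw [resp_eq, resp_eq, mulVec_add, hb, add_zero]
      congr 2
      funext i
      exact ih i.1 i.2 _
  funext j
  exact key j.1 j.2

/-- Log-likelihood ratio of a transcript `r` between the input `a + G` and the input `G`, for a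
standard Gaussian `G`. -/
def logLR (Q : QueryMaps N k t) (a : Fin N → ℝ) (r : Fin t → Fin k → ℝ) : ℝ :=
  ∑ j, (∑ i, (Q j (hist r j) *ᵥ a) i * r j i - sqNorm (Q j (hist r j) *ᵥ a) / 2)

/-- Law of the transcript when the input is a standard Gaussian vector. -/
def nullLaw (k t : ℕ) : Measure (Fin t → Fin k → ℝ) := Measure.pi fun _ => gau (Fin k)

instance : IsProbabilityMeasure (nullLaw k t) := by unfold nullLaw; infer_instance

lemma measurable_hist (j : Fin t) :
    Measurable fun r : Fin t → Fin k → ℝ => hist r j :=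
  measurable_pi_iff.2 fun _ => measurable_pi_apply _

lemma measurable_query {Ω : Type*} [MeasurableSpace Ω] (Qf : Ω → QueryMaps N k t)
    (hQ : ∀ (j : Fin t) (i : Fin k) (l : Fin N),
      Measurable fun p : Ω × (Fin (j : ℕ) → Fin k → ℝ) => Qf p.1 j p.2 i l)
    (a : Fin N → ℝ) (j : Fin t) :
    Measurable fun p : Ω × (Fin (j : ℕ) → Fin k → ℝ) => Qf p.1 j p.2 *ᵥ a := by
  refine measurable_pi_iff.2 fun i => ?_
  simp only [mulVec, dotProduct]
  exact Finset.measurable_sum _ fun l _ => (hQ j i l).mul_const _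

lemma measurable_sqNorm {ι : Type*} [Fintype ι] : Measurable (sqNorm : (ι → ℝ) → ℝ) := by
  unfold sqNorm; fun_prop

lemma measurable_logLR {Ω : Type*} [MeasurableSpace Ω] (Qf : Ω → QueryMaps N k t)
    (hQ : ∀ (j : Fin t) (i : Fin k) (l : Fin N),
      Measurable fun p : Ω × (Fin (j : ℕ) → Fin k → ℝ) => Qf p.1 j p.2 i l)
    (a : Fin N → ℝ) :
    Measurable fun p : Ω × (Fin t → Fin k → ℝ) => logLR (Qf p.1) a p.2 := by
  unfold logLR
  refine Finset.measurable_sum _ fun j _ => ?_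
  have hq : Measurable fun p : Ω × (Fin t → Fin k → ℝ) => Qf p.1 j (hist p.2 j) *ᵥ a :=
    (measurable_query Qf hQ a j).comp
      (measurable_fst.prodMk ((measurable_hist j).comp measurable_snd))
  refine Measurable.sub (Finset.measurable_sum _ fun i _ => ?_)
    ((measurable_sqNorm.comp hq).div_const _)
  exact ((measurable_pi_apply i).comp hq).mul (by fun_prop)

lemma logLR_cons (Q : QueryMaps N k (t + 1)) (a : Fin N → ℝ) (z : Fin k → ℝ)
    (r : Fin t → Fin k → ℝ) :
    logLR Q a (Fin.cons z r) = (∑ i, (fstQ Q *ᵥ a) i * z i - sqNorm (fstQ Q *ᵥ a) / 2)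
      + logLR (tailQ Q z) a r := by
  unfold logLR
  rw [Fin.sum_univ_succ]
  have e0 : Q 0 (hist (Fin.cons z r) 0) = fstQ Q := fstQ_eq Q _
  have e1 : ∀ j : Fin t, Q j.succ (hist (Fin.cons z r) j.succ) = tailQ Q z j (hist r j) :=
    fun j => congrArg (Q j.succ) (hist_cons_succ ..)
  simp only [e0, e1, Fin.cons_zero, Fin.cons_succ]

/-- The transcript on input `a + G`, with `G` a standard Gaussian vector, has density
`exp (logLR Q a ·)` with respect to `nullLaw`. -/
theorem lintegral_resp : ∀ {t : ℕ} (Q : QueryMaps N k t) (_ : Q.Valid) (a : Fin N → ℝ)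
    (f : (Fin t → Fin k → ℝ) → ℝ≥0∞) (_ : Measurable f),
    ∫⁻ G, f (resp Q (a + G)) ∂gau (Fin N)
      = ∫⁻ r, f r * ENNReal.ofReal (Real.exp (logLR Q a r)) ∂nullLaw k t := by
  intro t
  induction t with
  | zero =>
    intro Q _ a f _
    have h1 : ∀ r : Fin 0 → Fin k → ℝ, f r = f Fin.elim0 := fun r =>
      congrArg f (Subsingleton.elim _ _)
    simp [h1, logLR]
  | succ t ih =>
    intro Q hQ a f hf
    set q := fstQ Q with hq
    have hqq : q * qᵀ = 1 := hQ.2.1 0 _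
    have hmt := measurable_tailQ Q hQ
    have hΦ : Measurable fun p : (Fin k → ℝ) × (Fin N → ℝ) =>
        f (Fin.cons (q *ᵥ a + p.1) (resp (tailQ Q (q *ᵥ a + p.1)) (a + p.2))) := by
      refine hf.comp (measurable_cons.comp (Measurable.prodMk (by fun_prop) ?_))
      exact (measurable_resp (tailQ Q) hmt).comp
        (f := fun p : (Fin k → ℝ) × (Fin N → ℝ) => (q *ᵥ a + p.1, a + p.2)) (by fun_prop)
    have hh : Measurable fun p : (Fin k → ℝ) × (Fin t → Fin k → ℝ) =>
        f (Fin.cons p.1 p.2) * ENNReal.ofReal (Real.exp (logLR (tailQ Q p.1) a p.2)) :=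
      (hf.comp measurable_cons).mul (measurable_logLR (tailQ Q) hmt a).exp.ennreal_ofReal
    calc ∫⁻ G, f (resp Q (a + G)) ∂gau (Fin N)
        = ∫⁻ _g, ∫⁻ G, f (resp Q (a + G)) ∂gau (Fin N) ∂gau (Fin k) := by simp
      _ = ∫⁻ g, ∫⁻ G, (fun p : (Fin k → ℝ) × (Fin N → ℝ) =>
            f (Fin.cons (q *ᵥ a + p.1) (resp (tailQ Q (q *ᵥ a + p.1)) (a + p.2))))
            (q *ᵥ G, G + qᵀ *ᵥ (g - q *ᵥ G)) ∂gau (Fin N) ∂gau (Fin k) := by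
          refine lintegral_congr fun g => lintegral_congr fun G => ?_
          simp only
          rw [resp_succ, ← hq, ← mulVec_add, ← add_assoc, resp_add_of_orthogonal (tailQ Q _) (a + G)]
          intro j h
          rw [mulVec_mulVec, hQ.tailQ_fstQ, zero_mulVec]
      _ = ∫⁻ g, ∫⁻ G, f (Fin.cons (q *ᵥ a + g) (resp (tailQ Q (q *ᵥ a + g)) (a + G)))
            ∂gau (Fin N) ∂gau (Fin k) := lintegral_swap q hqq _ hΦ
      _ = ∫⁻ g, ∫⁻ r, f (Fin.cons (q *ᵥ a + g) r)
            * ENNReal.ofReal (Real.exp (logLR (tailQ Q (q *ᵥ a + g)) a r))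
            ∂nullLaw k t ∂gau (Fin k) := by
          refine lintegral_congr fun g => ?_
          exact ih (tailQ Q (q *ᵥ a + g)) (hQ.tailQ _) a (fun r => f (Fin.cons (q *ᵥ a + g) r))
            (hf.comp (measurable_cons.comp measurable_prodMk_left))
      _ = ∫⁻ z, (∫⁻ r, f (Fin.cons z r) * ENNReal.ofReal (Real.exp (logLR (tailQ Q z) a r))
            ∂nullLaw k t) * ENNReal.ofReal
              (Real.exp (∑ i, (q *ᵥ a) i * z i - sqNorm (q *ᵥ a) / 2)) ∂gau (Fin k) :=
          lintegral_shift_gau (q *ᵥ a) (fun z => ∫⁻ r, f (Fin.cons z r)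
            * ENNReal.ofReal (Real.exp (logLR (tailQ Q z) a r)) ∂nullLaw k t)
            (Measurable.lintegral_prod_right' hh)
      _ = ∫⁻ z, ∫⁻ r, f (Fin.cons z r) * ENNReal.ofReal (Real.exp (logLR Q a (Fin.cons z r)))
            ∂nullLaw k t ∂gau (Fin k) := by
          refine lintegral_congr fun z => ?_
          rw [← lintegral_mul_const' _ _ ENNReal.ofReal_ne_top]
          refine lintegral_congr fun r => ?_
          rw [logLR_cons, Real.exp_add, ENNReal.ofReal_mul (Real.exp_pos _).le, mul_assoc,
            mul_comm (ENNReal.ofReal (Real.exp (logLR (tailQ Q z) a r)))]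
      _ = ∫⁻ r, f r * ENNReal.ofReal (Real.exp (logLR Q a r)) ∂nullLaw k (t + 1) := by
          have hF : Measurable fun r : Fin (t + 1) → Fin k → ℝ =>
              f r * ENNReal.ofReal (Real.exp (logLR Q a r)) := by
            refine hf.mul ?_
            have := (measurable_logLR (Ω := Unit) (fun _ => Q)
              (fun j i l => (hQ.1 j i l).comp measurable_snd) a).comp
              (measurable_prodMk_left (x := ()))
            exact this.exp.ennreal_ofReal
          have hP := (measurePreserving_piFinSuccAbove (α := fun _ : Fin (t + 1) => Fin k → ℝ)
            (fun _ => gau (Fin k)) 0).symm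
          rw [lintegral_lintegral (f := fun z r => f (Fin.cons z r) *
            ENNReal.ofReal (Real.exp (logLR Q a (Fin.cons z r))))
            (hF.comp measurable_cons).aemeasurable]
          rw [nullLaw, nullLaw, ← hP.lintegral_comp hF]
          refine lintegral_congr fun p => ?_
          simp [MeasurableEquiv.piFinSuccAbove, Fin.insertNthEquiv]

end QueryMaps

/-! ### Quadratic exponential moments of Gaussian and sign vectors -/

lemma sqNorm_eq_dot {ι : Type*} [Fintype ι] (x : ι → ℝ) : sqNorm x = x ⬝ᵥ x := by
  simp [sqNorm, dotProduct, sq]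

lemma sqNorm_nonneg {ι : Type*} [Fintype ι] (x : ι → ℝ) : 0 ≤ sqNorm x :=
  Finset.sum_nonneg fun _ _ => sq_nonneg _

lemma sqNorm_smul {ι : Type*} [Fintype ι] (c : ℝ) (x : ι → ℝ) :
    sqNorm (c • x) = c ^ 2 * sqNorm x := by
  simp [sqNorm, mul_pow, Finset.mul_sum]

lemma frobSq_nonneg {ι κ : Type*} [Fintype ι] [Fintype κ] (N : Matrix ι κ ℝ) : 0 ≤ frobSq N :=
  Finset.sum_nonneg fun _ _ => Finset.sum_nonneg fun _ _ => sq_nonneg _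

lemma frobSq_smul {ι κ : Type*} [Fintype ι] [Fintype κ] (c : ℝ) (N : Matrix ι κ ℝ) :
    frobSq (c • N) = c ^ 2 * frobSq N := by
  simp [frobSq, mul_pow, Finset.mul_sum]

lemma sqNorm_mulVec {ι κ : Type*} [Fintype ι] [Fintype κ] (N : Matrix ι κ ℝ) (y : κ → ℝ) :
    sqNorm (N *ᵥ y) = y ⬝ᵥ ((Nᵀ * N) *ᵥ y) := by
  rw [sqNorm_eq_dot, ← mulVec_mulVec, dotProduct_mulVec, ← mulVec_transpose, dotProduct_comm]

lemma frobSq_eq_trace {ι κ : Type*} [Fintype ι] [Fintype κ] (N : Matrix ι κ ℝ) :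
    frobSq N = (Nᵀ * N).trace := by
  simp only [frobSq, trace, diag, mul_apply, transpose_apply, ← sq]
  exact Finset.sum_comm

lemma dot_sq_le {ι : Type*} [Fintype ι] (x y : ι → ℝ) :
    (x ⬝ᵥ y) ^ 2 ≤ sqNorm x * sqNorm y := by
  simpa [dotProduct, sqNorm] using Finset.sum_mul_sq_le_sq_mul_sq Finset.univ x y

/-- A bound on a matrix as an operator passes to its transpose. -/
lemma sqNorm_transpose_le {ι κ : Type*} [Fintype ι] [Fintype κ] (N : Matrix ι κ ℝ) (c : ℝ)
    (hc : 0 ≤ c) (hN : ∀ y, sqNorm (N *ᵥ y) ≤ c * sqNorm y) (z : ι → ℝ) :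
    sqNorm (Nᵀ *ᵥ z) ≤ c * sqNorm z := by
  have h1 : sqNorm (Nᵀ *ᵥ z) = z ⬝ᵥ (N *ᵥ (Nᵀ *ᵥ z)) := by
    rw [sqNorm_mulVec, transpose_transpose, mulVec_mulVec]
  have h2 := dot_sq_le z (N *ᵥ (Nᵀ *ᵥ z))
  rw [← h1] at h2
  have h3 := hN (Nᵀ *ᵥ z)
  have h4 := sqNorm_nonneg z
  have h5 := sqNorm_nonneg (Nᵀ *ᵥ z)
  rcases h5.eq_or_lt with h | h
  · rw [← h]
    positivity
  · have : sqNorm (Nᵀ *ᵥ z) * sqNorm (Nᵀ *ᵥ z) ≤ (c * sqNorm z) * sqNorm (Nᵀ *ᵥ z) := by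
      nlinarith
    exact le_of_mul_le_mul_right this h

/-- A Gaussian quadratic form with operator norm at most one half has exponential moment
controlled by its trace. -/
lemma lintegral_exp_quad {ι κ : Type*} [Fintype ι] [Fintype κ] (N : Matrix ι κ ℝ)
    (hN : ∀ y, sqNorm (N *ᵥ y) ≤ 1 / 2 * sqNorm y) :
    ∫⁻ h, ENNReal.ofReal (Real.exp (sqNorm (N *ᵥ h) / 2)) ∂gau κ
      ≤ ENNReal.ofReal (Real.exp (frobSq N)) := by
  have hA : (Nᵀ * N).IsHermitian := by
    simpa using isHermitian_conjTranspose_mul_self N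
  set U : Matrix κ κ ℝ := (hA.eigenvectorUnitary : Matrix κ κ ℝ) with hU
  have hUU : Uᵀ * U = 1 := by
    have := Unitary.star_mul_self_of_mem hA.eigenvectorUnitary.2
    simpa [star_eq_conjTranspose] using this
  have hUU' : U * Uᵀ = 1 := mul_eq_one_comm.1 hUU
  have hspec : (N * U)ᵀ * (N * U) = diagonal hA.eigenvalues := by
    have hsp : Nᵀ * N = U * diagonal hA.eigenvalues * Uᵀ := by
      have := hA.spectral_theorem
      rw [Unitary.conjStarAlgAut_apply] at this
      simp only [star_eq_conjTranspose, conjTranspose_eq_transpose_of_trivial] at this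
      exact this
    have h2 : (N * U)ᵀ * (N * U) = Uᵀ * ((Nᵀ * N) * U) := by
      simp only [transpose_mul, Matrix.mul_assoc]
    rw [h2, congrArg (· * U) hsp]
    rw [Matrix.mul_assoc, hUU, Matrix.mul_one, ← Matrix.mul_assoc, hUU, Matrix.one_mul]
  have hsq : ∀ h, sqNorm (N *ᵥ (U *ᵥ h)) = ∑ i, hA.eigenvalues i * h i ^ 2 := by
    intro h
    rw [mulVec_mulVec, sqNorm_mulVec, hspec]
    simp only [mulVec_diagonal, dotProduct]
    exact Finset.sum_congr rfl fun i _ => by ring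
  have hUn : ∀ h, sqNorm (U *ᵥ h) = sqNorm h := by
    intro h; rw [sqNorm_mulVec, hUU, one_mulVec, sqNorm_eq_dot]
  have hev : ∀ i, hA.eigenvalues i = sqNorm (N *ᵥ (U *ᵥ Pi.single i 1)) := by
    intro i; rw [hsq]; simp [Pi.single_apply]
  have htr : ∑ i, hA.eigenvalues i = frobSq N := by
    rw [← trace_diagonal, ← hspec, transpose_mul, Matrix.mul_assoc, trace_mul_comm,
      Matrix.mul_assoc, Matrix.mul_assoc, hUU', Matrix.mul_one, frobSq_eq_trace]
  have h0 : ∀ i, 0 ≤ hA.eigenvalues i := fun i => by rw [hev]; exact sqNorm_nonneg _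
  have h1 : ∀ i, hA.eigenvalues i ≤ 1 / 2 := fun i => by
    rw [hev]
    refine (hN _).trans ?_
    rw [hUn]; simp [sqNorm, Pi.single_apply]
  have hm : Measurable fun h : κ → ℝ => ENNReal.ofReal (Real.exp (sqNorm (N *ᵥ h) / 2)) := by
    unfold sqNorm; fun_prop
  rw [← (gau_map_orthogonal U hUU).lintegral_comp hm, ← htr]
  refine le_trans (le_of_eq ?_) (lintegral_exp_diag _ h0 h1)
  refine lintegral_congr fun h => ?_
  rw [hsq, Finset.sum_div]

/-- Average over a finite type. -/
def avg {σ : Type*} [Fintype σ] (f : σ → ℝ≥0∞) : ℝ≥0∞ :=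
  (Fintype.card σ : ℝ≥0∞)⁻¹ * ∑ s, f s

section avg
variable {σ τ : Type*} [Fintype σ] [Fintype τ]

lemma avg_mono {f g : σ → ℝ≥0∞} (h : ∀ s, f s ≤ g s) : avg f ≤ avg g :=
  mul_le_mul_right (Finset.sum_le_sum fun s _ => h s) _

lemma avg_const [Nonempty σ] (c : ℝ≥0∞) : avg (fun _ : σ => c) = c := by
  rw [avg, Finset.sum_const, nsmul_eq_mul, ← mul_assoc, Finset.card_univ,
    ENNReal.inv_mul_cancel (by simp) (ENNReal.natCast_ne_top _), one_mul]

lemma avg_add (f g : σ → ℝ≥0∞) : avg (fun s => f s + g s) = avg f + avg g := by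
  simp [avg, Finset.sum_add_distrib, mul_add]

lemma avg_mul_left (c : ℝ≥0∞) (f : σ → ℝ≥0∞) : avg (fun s => c * f s) = c * avg f := by
  rw [avg, avg, ← Finset.mul_sum, mul_left_comm]

lemma avg_finset_sum {ι : Type*} (S : Finset ι) (f : σ → ι → ℝ≥0∞) :
    avg (fun s => ∑ i ∈ S, f s i) = ∑ i ∈ S, avg fun s => f s i := by
  simp only [avg]; rw [Finset.sum_comm, Finset.mul_sum]

lemma avg_prod (f : σ × τ → ℝ≥0∞) : avg f = avg fun s => avg fun t => f (s, t) := by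
  simp only [avg, Fintype.card_prod, Fintype.sum_prod_type, Nat.cast_mul, ← Finset.mul_sum]
  rw [ENNReal.mul_inv (by simp) (by simp), mul_assoc]

lemma avg_comm (f : σ → τ → ℝ≥0∞) :
    (avg fun s => avg fun t => f s t) = avg fun t => avg fun s => f s t := by
  simp only [avg, ← Finset.mul_sum]
  rw [Finset.sum_comm, mul_left_comm]

lemma avg_lintegral {α : Type*} [MeasurableSpace α] (ν : Measure α) (f : σ → α → ℝ≥0∞)
    (hf : ∀ s, Measurable (f s)) :
    (avg fun s => ∫⁻ x, f s x ∂ν) = ∫⁻ x, avg (fun s => f s x) ∂ν := by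
  simp only [avg]
  rw [lintegral_const_mul _ (Finset.measurable_sum _ fun s _ => hf s),
    lintegral_finsetSum _ fun s _ => hf s]

lemma measurable_avg {α : Type*} [MeasurableSpace α] (f : σ → α → ℝ≥0∞)
    (hf : ∀ s, Measurable (f s)) : Measurable fun x => avg fun s => f s x :=
  (Finset.measurable_sum _ fun s _ => hf s).const_mul _

end avg

/-- The sign vector coded by a Boolean vector. -/
def sgn {n : ℕ} (b : Fin n → Bool) : Fin n → ℝ := fun i => if b i then 1 else -1

lemma sgn_sq {n : ℕ} (b : Fin n → Bool) (i : Fin n) : sgn b i ^ 2 = 1 := by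
  unfold sgn; split_ifs <;> simp

lemma sqNorm_sgn {n : ℕ} (b : Fin n → Bool) : sqNorm (sgn b) = n := by
  simp [sqNorm, sgn_sq]

/-- Random signs are subgaussian with variance proxy one. -/
lemma avg_exp_linear {n : ℕ} (c : Fin n → ℝ) :
    (avg fun b : Fin n → Bool => ENNReal.ofReal (Real.exp (∑ i, c i * sgn b i)))
      ≤ ENNReal.ofReal (Real.exp (sqNorm c / 2)) := by
  have h1 : ∑ b : Fin n → Bool, Real.exp (∑ i, c i * sgn b i)
      = 2 ^ n * ∏ i, Real.cosh (c i) := by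
    have : ∀ i, 2 * Real.cosh (c i) = ∑ x : Bool, Real.exp (c i * if x then 1 else -1) := by
      intro i; simp [Real.cosh_eq]; ring
    have h2 : (2 : ℝ) ^ n * ∏ i, Real.cosh (c i) = ∏ i, (2 * Real.cosh (c i)) := by
      rw [Finset.prod_mul_distrib]; simp
    rw [h2]
    simp_rw [this]
    rw [Finset.prod_univ_sum, Fintype.piFinset_univ]
    exact Finset.sum_congr rfl fun b _ => by rw [Real.exp_sum]; rfl
  rw [avg, ← ENNReal.ofReal_sum_of_nonneg fun _ _ => (Real.exp_pos _).le, h1,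
    ENNReal.ofReal_mul (by positivity)]
  have h3 : (Fintype.card (Fin n → Bool) : ℝ≥0∞) = ENNReal.ofReal (2 ^ n) := by
    simp [ENNReal.ofReal_pow]
  rw [h3, ← mul_assoc, ENNReal.inv_mul_cancel (by simp) ENNReal.ofReal_ne_top,
    one_mul]
  refine ENNReal.ofReal_le_ofReal ?_
  rw [sqNorm, Finset.sum_div, Real.exp_sum]
  exact Finset.prod_le_prod (fun _ _ => (Real.cosh_pos _).le)
    fun i _ => Real.cosh_le_exp_half_sq _

/-- The analogue of `lintegral_exp_quad` for random signs, obtained by linearising the square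
with an auxiliary Gaussian. -/
lemma avg_exp_quad {n : ℕ} {ι : Type*} [Fintype ι] (M : Matrix ι (Fin n) ℝ)
    (hM : ∀ y, sqNorm (M *ᵥ y) ≤ 1 / 2 * sqNorm y) :
    (avg fun b : Fin n → Bool => ENNReal.ofReal (Real.exp (sqNorm (M *ᵥ sgn b) / 2)))
      ≤ ENNReal.ofReal (Real.exp (frobSq M)) := by
  have hfr : frobSq Mᵀ = frobSq M := by
    simp only [frobSq, transpose_apply]; exact Finset.sum_comm
  rw [← hfr]
  refine le_trans ?_ (lintegral_exp_quad Mᵀ (sqNorm_transpose_le M _ (by norm_num) hM))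
  simp_rw [← lintegral_exp_linear (M *ᵥ sgn _)]
  rw [avg_lintegral _ _ fun b => by fun_prop]
  refine lintegral_mono fun h => ?_
  refine le_trans (le_of_eq ?_) (avg_exp_linear (Mᵀ *ᵥ h))
  congr 1
  funext b
  congr 2
  change (M *ᵥ sgn b) ⬝ᵥ h = (Mᵀ *ᵥ h) ⬝ᵥ sgn b
  rw [dotProduct_comm, dotProduct_mulVec, mulVec_transpose]

/-! ### Anticoncentration of the rank-one sign prior -/

/-- A matrix with orthonormal rows is a contraction. -/
lemma sqNorm_mulVec_le_of_orthonormal {ι κ : Type*} [Fintype ι] [Fintype κ]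
    [DecidableEq κ] (Q : Matrix κ ι ℝ) (hQ : Q * Qᵀ = 1) (x : ι → ℝ) : sqNorm (Q *ᵥ x) ≤ sqNorm x := by
  have h : ∀ z, sqNorm (Qᵀ *ᵥ z) ≤ 1 * sqNorm z := fun z => by
    rw [sqNorm_mulVec, transpose_transpose, hQ, one_mulVec, sqNorm_eq_dot, one_mul]
  simpa using sqNorm_transpose_le Qᵀ 1 zero_le_one h x

lemma frobSq_of_orthonormal {ι κ : Type*} [Fintype ι] [Fintype κ]
    [DecidableEq κ] (Q : Matrix κ ι ℝ) (hQ : Q * Qᵀ = 1) : frobSq Q = Fintype.card κ := by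
  rw [frobSq_eq_trace, trace_mul_comm, hQ, trace_one]

lemma sum_fin_mul {n : ℕ} (f : Fin (n * n) → ℝ) :
    ∑ l, f l = ∑ i : Fin n, ∑ j : Fin n, f (finProdFinEquiv (i, j)) := by
  rw [← finProdFinEquiv.sum_comp, Fintype.sum_prod_type]

@[simp] lemma tensor_apply {n : ℕ} (u v : Fin n → ℝ) (i j : Fin n) :
    tensor u v (finProdFinEquiv (i, j)) = u i * v j := by
  simp [tensor, _root_.vec]

lemma sqNorm_tensor {n : ℕ} (u v : Fin n → ℝ) : sqNorm (tensor u v) = sqNorm u * sqNorm v := by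
  simp only [sqNorm]
  rw [sum_fin_mul]
  simp [mul_pow, Finset.sum_mul_sum]

/-- The rank-one sign matrices, flattened. -/
def pl {n : ℕ} (s : (Fin n → Bool) × (Fin n → Bool)) : Fin (n * n) → ℝ :=
  tensor (sgn s.1) (sgn s.2)

/-- Exponential moment of the energy that `k` orthonormal queries capture from a random
rank-one sign matrix; the two factors are averaged out one after the other. -/
lemma avg_exp_query {n k : ℕ} (hn : 0 < n) (Q : Matrix (Fin k) (Fin (n * n)) ℝ)
    (hQ : Q * Qᵀ = 1) :
    (avg fun s : (Fin n → Bool) × (Fin n → Bool) =>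
        ENNReal.ofReal (Real.exp (sqNorm (Q *ᵥ pl s) / (8 * n))))
      ≤ ENNReal.ofReal (Real.exp (k / (2 * n))) := by
  have hn' : (0 : ℝ) < n := by exact_mod_cast hn
  set M : (Fin n → ℝ) → Matrix (Fin k) (Fin n) ℝ :=
    fun u => Matrix.of fun l j => ∑ i, Q l (finProdFinEquiv (i, j)) * u i with hM
  set M' : Matrix (Fin k × Fin n) (Fin n) ℝ :=
    Matrix.of fun q i => Q q.1 (finProdFinEquiv (i, q.2)) with hM'
  have e1 : ∀ u v, Q *ᵥ tensor u v = M u *ᵥ v := by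
    intro u v; funext l
    simp only [mulVec, dotProduct, hM, of_apply]
    rw [sum_fin_mul, Finset.sum_comm]
    refine Finset.sum_congr rfl fun j _ => ?_
    rw [Finset.sum_mul]
    exact Finset.sum_congr rfl fun i _ => by rw [tensor_apply]; ring
  have e2 : ∀ u, frobSq (M u) = sqNorm (M' *ᵥ u) := by
    intro u
    simp only [frobSq, sqNorm, Fintype.sum_prod_type]
    rfl
  have b1 : ∀ u y, sqNorm (M u *ᵥ y) ≤ sqNorm u * sqNorm y := by
    intro u y
    rw [← e1, ← sqNorm_tensor]; exact sqNorm_mulVec_le_of_orthonormal Q hQ _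
  have b2 : ∀ y, sqNorm (M' *ᵥ y) ≤ n * sqNorm y := by
    intro y
    have h : frobSq (M y) = ∑ j, sqNorm (M y *ᵥ Pi.single j 1) := by
      simp only [frobSq, sqNorm, mulVec_single_one, col_apply]
      exact Finset.sum_comm
    rw [← e2, h]
    refine (Finset.sum_le_sum fun j _ => b1 y (Pi.single j 1)).trans ?_
    simp [sqNorm, Pi.single_apply]
  have f2 : frobSq M' = k := by
    have := frobSq_of_orthonormal Q hQ
    rw [Fintype.card_fin] at this
    rw [← this]
    simp only [frobSq, Fintype.sum_prod_type]
    refine Finset.sum_congr rfl fun l _ => ?_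
    rw [sum_fin_mul, Finset.sum_comm]
    rfl
  obtain ⟨c, hc⟩ : ∃ c : ℝ, c ^ 2 = 1 / (4 * n) := ⟨√(1 / (4 * n)), Real.sq_sqrt (by positivity)⟩
  obtain ⟨d, hd⟩ : ∃ d : ℝ, d ^ 2 = 1 / (2 * n) := ⟨√(1 / (2 * n)), Real.sq_sqrt (by positivity)⟩
  rw [avg_prod]
  calc (avg fun a : Fin n → Bool => avg fun b : Fin n → Bool =>
        ENNReal.ofReal (Real.exp (sqNorm (Q *ᵥ pl (a, b)) / (8 * n))))
      = avg fun a : Fin n → Bool => avg fun b : Fin n → Bool =>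
        ENNReal.ofReal (Real.exp (sqNorm ((c • M (sgn a)) *ᵥ sgn b) / 2)) := by
        congr 1; funext a; congr 1; funext b
        rw [smul_mulVec, sqNorm_smul, hc, ← e1, pl]
        congr 2; field_simp; ring
    _ ≤ avg fun a : Fin n → Bool => ENNReal.ofReal (Real.exp (frobSq (c • M (sgn a)))) := by
        refine avg_mono fun a => avg_exp_quad _ fun y => ?_
        rw [smul_mulVec, sqNorm_smul, hc]
        have := b1 (sgn a) y
        rw [sqNorm_sgn] at this
        rw [one_div, ← div_eq_inv_mul, div_le_iff₀ (by positivity)]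
        nlinarith [sqNorm_nonneg y]
    _ = avg fun a : Fin n → Bool => ENNReal.ofReal (Real.exp (sqNorm ((d • M') *ᵥ sgn a) / 2)) := by
        congr 1; funext a
        rw [smul_mulVec, sqNorm_smul, hd, frobSq_smul, hc, e2]
        congr 2; field_simp; ring
    _ ≤ ENNReal.ofReal (Real.exp (frobSq (d • M'))) := by
        refine avg_exp_quad _ fun y => ?_
        rw [smul_mulVec, sqNorm_smul, hd, one_div, ← div_eq_inv_mul, div_le_iff₀ (by positivity)]
        nlinarith [b2 y]
    _ = ENNReal.ofReal (Real.exp (k / (2 * n))) := by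
        rw [frobSq_smul, hd, f2]; congr 2; ring

lemma avg_ite_le {σ : Type*} [Fintype σ] (P : σ → Prop) [DecidablePred P]
    (f : σ → ℝ) (c d : ℝ)
    (h : ∀ s, P s → c ≤ f s)
    (hf : (avg fun s => ENNReal.ofReal (Real.exp (f s))) ≤ ENNReal.ofReal (Real.exp d)) :
    (avg fun s => if P s then (1 : ℝ≥0∞) else 0) ≤ ENNReal.ofReal (Real.exp (d - c)) := by
  have h1 : (avg fun s => if P s then (1 : ℝ≥0∞) else 0)
      ≤ avg fun s => ENNReal.ofReal (Real.exp (-c)) * ENNReal.ofReal (Real.exp (f s)) := by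
    refine avg_mono fun s => ?_
    split_ifs with hs
    · rw [← ENNReal.ofReal_mul (Real.exp_pos _).le, ← Real.exp_add, ← ENNReal.ofReal_one]
      refine ENNReal.ofReal_le_ofReal (Real.one_le_exp ?_)
      linarith [h s hs]
    · exact zero_le
  rw [avg_mul_left] at h1
  refine h1.trans ((mul_le_mul_right hf _).trans ?_)
  rw [← ENNReal.ofReal_mul (Real.exp_pos _).le, ← Real.exp_add, neg_add_eq_sub]

lemma avg_query_tail {n k : ℕ} (hn : 0 < n) (Q : Matrix (Fin k) (Fin (n * n)) ℝ)
    (hQ : Q * Qᵀ = 1) (τ : ℝ) :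
    (avg fun s : (Fin n → Bool) × (Fin n → Bool) =>
        if τ < sqNorm (Q *ᵥ pl s) then (1 : ℝ≥0∞) else 0)
      ≤ ENNReal.ofReal (Real.exp (k / (2 * n) - τ / (8 * n))) :=
  avg_ite_le _ _ _ _ (fun s hs => by gcongr) (avg_exp_query hn Q hQ)

/-- An orthonormal frame for the column space. -/
lemma exists_range_frame {n : ℕ} (B : Matrix (Fin n) (Fin n) ℝ) :
    ∃ W : Matrix (Fin B.rank) (Fin n) ℝ, W * Wᵀ = 1 ∧
      ∀ y, Wᵀ *ᵥ (W *ᵥ (B *ᵥ y)) = B *ᵥ y := by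
  let e : (Fin n → ℝ) ≃ₗ[ℝ] EuclideanSpace ℝ (Fin n) := (WithLp.linearEquiv 2 ℝ (Fin n → ℝ)).symm
  let S : Submodule ℝ (EuclideanSpace ℝ (Fin n)) := (LinearMap.range B.mulVecLin).map e.toLinearMap
  have hS : Module.finrank ℝ S = B.rank := LinearEquiv.finrank_map_eq e _
  let b : OrthonormalBasis (Fin B.rank) ℝ S :=
    (stdOrthonormalBasis ℝ S).reindex (finCongr hS)
  refine ⟨Matrix.of fun l i => (b l : EuclideanSpace ℝ (Fin n)) i, ?_, fun y => ?_⟩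
  · ext l m
    have := orthonormal_iff_ite.1 b.orthonormal l m
    simp only [Submodule.coe_inner, PiLp.inner_apply, RCLike.inner_apply, conj_trivial] at this
    simp only [mul_apply, of_apply, transpose_apply, one_apply]
    rw [← this]
    exact Finset.sum_congr rfl fun i _ => mul_comm _ _
  · have hy : e (B *ᵥ y) ∈ S := ⟨B *ᵥ y, ⟨y, rfl⟩, rfl⟩
    have h1 := b.sum_repr' ⟨e (B *ᵥ y), hy⟩
    have h2 := congrArg (fun z : S => (z : EuclideanSpace ℝ (Fin n))) h1
    funext i
    have h3 := congrArg (fun z : EuclideanSpace ℝ (Fin n) => z i) h2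
    simp only [Submodule.coe_sum, Submodule.coe_smul, Submodule.coe_inner, PiLp.inner_apply,
      RCLike.inner_apply, conj_trivial] at h3
    have h4 : (e (B *ᵥ y)) i = (B *ᵥ y) i := rfl
    rw [h4] at h3
    rw [← h3]
    simp only [mulVec, dotProduct, of_apply, transpose_apply]
    simp only [WithLp.ofLp_sum, Finset.sum_apply, PiLp.smul_apply, smul_eq_mul]
    refine Finset.sum_congr rfl fun l _ => ?_
    rw [mul_comm]
    congr 1
    exact Finset.sum_congr rfl fun j _ => mul_comm _ _

/-- A fixed matrix of rank at most `n / 8` is close to few of the planted sign matrices. -/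
lemma avg_output {n r : ℕ} (hr : 8 * r ≤ n) (hn : 0 < n) (B : Matrix (Fin n) (Fin n) ℝ)
    (hB : B.rank ≤ r) (α E : ℝ) (hα : 0 < α) (hE : E ≤ α ^ 2 * n ^ 3 / 4) :
    (avg fun s : (Fin n → Bool) × (Fin n → Bool) =>
        if sqNorm ((α * n) • sgn s.1 - B *ᵥ sgn s.2) ≤ E then (1 : ℝ≥0∞) else 0)
      ≤ ENNReal.ofReal (Real.exp (-(n / 8))) := by
  have hn' : (0 : ℝ) < n := by exact_mod_cast hn
  obtain ⟨W, hW, hWB⟩ := exists_range_frame B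
  obtain ⟨c, hc⟩ : ∃ c : ℝ, c ^ 2 = 1 / 2 := ⟨√(1 / 2), Real.sq_sqrt (by positivity)⟩
  rw [avg_prod, avg_comm]
  refine (avg_mono (g := fun _ => ENNReal.ofReal (Real.exp (-(n / 8)))) fun v => ?_).trans
    (avg_const _).le
  have h1 := avg_exp_quad (c • W) fun y => by
    rw [smul_mulVec, sqNorm_smul, hc]
    have := sqNorm_mulVec_le_of_orthonormal W hW y
    gcongr
  refine (avg_ite_le _ _ (3 * n / 16) _ (fun u hu => ?_) h1).trans ?_
  · rw [smul_mulVec, sqNorm_smul, hc]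
    have key : ∀ z w : Fin n → ℝ, Wᵀ *ᵥ (W *ᵥ w) = w →
        sqNorm (z - w) - sqNorm (W *ᵥ (z - w)) = sqNorm z - sqNorm (W *ᵥ z) := by
      intro z w hw
      have a1 : (W *ᵥ z) ⬝ᵥ (W *ᵥ w) = z ⬝ᵥ w := by
        conv_rhs => rw [← hw]
        rw [dotProduct_mulVec z, vecMul_transpose]
      have a2 : (W *ᵥ w) ⬝ᵥ (W *ᵥ w) = w ⬝ᵥ w := by
        conv_rhs => rw [← hw]
        rw [dotProduct_mulVec (Wᵀ *ᵥ (W *ᵥ w)), vecMul_transpose, hw]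
      simp only [sqNorm_eq_dot, mulVec_sub, sub_dotProduct, dotProduct_sub, a1, a2,
        dotProduct_comm w z, dotProduct_comm (W *ᵥ w) (W *ᵥ z)]
      ring
    have h2 := key ((α * n) • sgn u) (B *ᵥ sgn v) (hWB _)
    have h3 := sqNorm_nonneg (W *ᵥ ((α * n) • sgn u - B *ᵥ sgn v))
    rw [mulVec_smul, sqNorm_smul, sqNorm_smul, sqNorm_sgn] at h2
    have h4 : (α * n) ^ 2 * (n - sqNorm (W *ᵥ sgn u)) ≤ (α * n) ^ 2 * (n / 4) := by
      have : (α * n) ^ 2 * (n / 4 : ℝ) = α ^ 2 * n ^ 3 / 4 := by ring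
      simp only at hu
      linarith
    have h5 := le_of_mul_le_mul_left h4 (by positivity)
    linarith
  · refine ENNReal.ofReal_le_ofReal (Real.exp_le_exp.2 ?_)
    rw [frobSq_smul, hc, frobSq_of_orthonormal W hW, Fintype.card_fin]
    have : (B.rank : ℝ) ≤ r := by exact_mod_cast hB
    have : (8 * r : ℝ) ≤ n := by exact_mod_cast hr
    linarith

/-! ### Operator norm of a Gaussian matrix -/

/-- The square matrix whose flattening is `G`. -/
def unv {n : ℕ} (G : Fin (n * n) → ℝ) : Matrix (Fin n) (Fin n) ℝ :=
  Matrix.of fun i j => G (finProdFinEquiv (i, j))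

lemma vec_unv {n : ℕ} (G : Fin (n * n) → ℝ) : _root_.vec n (unv G) = G := by
  funext l
  exact congrArg G (finProdFinEquiv.apply_symm_apply l)

lemma sqNorm_add_le {ι : Type*} [Fintype ι] (x y : ι → ℝ) :
    sqNorm (x + y) ≤ 2 * (sqNorm x + sqNorm y) := by
  simp only [sqNorm, ← Finset.sum_add_distrib, Finset.mul_sum]
  exact Finset.sum_le_sum fun i _ => by simp only [Pi.add_apply]; nlinarith [sq_nonneg (x i - y i)]

lemma continuous_sqNorm {ι : Type*} [Fintype ι] : Continuous (sqNorm : (ι → ℝ) → ℝ) := by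
  unfold sqNorm; fun_prop

lemma lintegral_exp_unv {n : ℕ} (z : Fin n → ℝ) (hz : sqNorm z ≤ 1) :
    ∫⁻ G, ENNReal.ofReal (Real.exp (sqNorm (unv G *ᵥ z) / 4)) ∂gau (Fin (n * n))
      ≤ ENNReal.ofReal (Real.exp (n / 2)) := by
  obtain ⟨c, hc⟩ : ∃ c : ℝ, c ^ 2 = 1 / 2 := ⟨√(1 / 2), Real.sq_sqrt (by positivity)⟩
  set N : Matrix (Fin n) (Fin (n * n)) ℝ := Matrix.of fun i l =>
    if (finProdFinEquiv.symm l).1 = i then z (finProdFinEquiv.symm l).2 else 0 with hN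
  have e : ∀ G, N *ᵥ G = unv G *ᵥ z := by
    intro G; funext i
    simp only [mulVec, dotProduct, hN, of_apply, unv]
    rw [sum_fin_mul, Finset.sum_eq_single i]
    · exact Finset.sum_congr rfl fun j _ => by simp [mul_comm]
    · intro j _ hj
      exact Finset.sum_eq_zero fun l _ => by simp [hj]
    · simp
  have b : ∀ G, sqNorm (N *ᵥ G) ≤ sqNorm G := by
    intro G
    rw [e]
    have : sqNorm G = ∑ i, sqNorm (unv G i) := by
      simp only [sqNorm]; rw [sum_fin_mul]; rfl
    rw [this]
    refine Finset.sum_le_sum fun i _ => (dot_sq_le (unv G i) z).trans ?_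
    exact mul_le_of_le_one_right (sqNorm_nonneg _) hz
  have f : frobSq N = n * sqNorm z := by
    simp only [frobSq]
    have : ∀ i, ∑ l, N i l ^ 2 = sqNorm z := by
      intro i
      rw [sum_fin_mul, Finset.sum_eq_single i]
      · simp only [hN, of_apply, Equiv.symm_apply_apply, if_true, sqNorm]
      · intro j _ hj
        exact Finset.sum_eq_zero fun l _ => by
          simp only [hN, of_apply, Equiv.symm_apply_apply, if_neg hj]; simp
      · simp
    simp [this]
  have := lintegral_exp_quad (c • N) fun y => by
    rw [smul_mulVec, sqNorm_smul, hc]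
    have := b y
    gcongr
  refine le_trans (le_of_eq ?_) (this.trans (ENNReal.ofReal_le_ofReal (Real.exp_le_exp.2 ?_)))
  · refine lintegral_congr fun G => ?_
    rw [smul_mulVec, sqNorm_smul, hc, e]; congr 2; ring
  · rw [frobSq_smul, hc, f]
    have : (0 : ℝ) ≤ n := Nat.cast_nonneg n
    nlinarith

section
open scoped Pointwise

/-- A Gaussian matrix has operator norm at most `8 √n` up to an exponentially small probability.
Instead of a net, the exponential moment is averaged over the unit ball: if `G` is large at `b`,
it is large at one of `b / 2 + y`, `b / 2 - y` for every `y` of norm at most `1 / 2`. -/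
lemma gau_opNorm {n : ℕ} :
    gau (Fin (n * n)) {G | ∃ b, sqNorm b ≤ 1 ∧ 64 * n < sqNorm (unv G *ᵥ b)}
      ≤ ENNReal.ofReal (2 * 2 ^ n * Real.exp (n / 2 - 4 * n)) := by
  set K : Set (Fin n → ℝ) := {z | sqNorm z ≤ 1} with hK
  set K' : Set (Fin n → ℝ) := {z | sqNorm z ≤ 1 / 4} with hK'
  set V := volume K with hV
  have hKm : MeasurableSet K := (isClosed_le continuous_sqNorm continuous_const).measurableSet
  have hKm' : MeasurableSet K' := (isClosed_le continuous_sqNorm continuous_const).measurableSet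
  have hVt : V ≠ ⊤ := by
    have : K ⊆ Metric.closedBall 0 1 := by
      intro z hz
      rw [mem_closedBall_zero_iff, pi_norm_le_iff_of_nonneg zero_le_one]
      intro i
      rw [Real.norm_eq_abs, ← sq_le_one_iff_abs_le_one]
      exact (Finset.single_le_sum (f := fun i => z i ^ 2) (fun _ _ => sq_nonneg _)
        (Finset.mem_univ i)).trans hz
    exact (Metric.isBounded_closedBall.subset this).measure_lt_top.ne
  have hV0 : V ≠ 0 := by
    have ho : IsOpen {z : Fin n → ℝ | sqNorm z < 1} :=
      isOpen_lt continuous_sqNorm continuous_const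
    have := ho.measure_pos volume ⟨0, by simp [sqNorm]⟩
    exact (this.trans_le (measure_mono fun z (hz : sqNorm z < 1) => hz.le)).ne'
  have hV' : volume K' = ENNReal.ofReal ((1 / 2) ^ n) * V := by
    have : K' = (1 / 2 : ℝ) • K := by
      ext z
      rw [Set.mem_smul_set_iff_inv_smul_mem₀ (by norm_num)]
      simp only [hK, hK', Set.mem_ofPred_eq, sqNorm_smul]
      constructor <;> intro h <;> norm_num at h ⊢ <;> linarith
    rw [this, Measure.addHaar_smul]
    simp [hV]
  have hjm : Measurable fun q : (Fin (n * n) → ℝ) × (Fin n → ℝ) =>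
      ENNReal.ofReal (Real.exp (sqNorm (unv q.1 *ᵥ q.2) / 4)) := by
    simp only [sqNorm, mulVec, dotProduct, unv, of_apply]; fun_prop
  set Φ : (Fin (n * n) → ℝ) → ℝ≥0∞ := fun G =>
    ∫⁻ z in K, ENNReal.ofReal (Real.exp (sqNorm (unv G *ᵥ z) / 4)) with hΦ
  have hΦm : Measurable Φ := hjm.lintegral_prod_right'
  have hΦi : ∫⁻ G, Φ G ∂gau (Fin (n * n)) ≤ ENNReal.ofReal (Real.exp (n / 2)) * V := by
    rw [hΦ, lintegral_lintegral_swap hjm.aemeasurable]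
    refine (setLIntegral_mono measurable_const fun z hz => ?_).trans
      (setLIntegral_const K (ENNReal.ofReal (Real.exp (n / 2)))).le
    exact lintegral_exp_unv z hz
  have hlow : ∀ G, (∃ b, sqNorm b ≤ 1 ∧ 64 * n < sqNorm (unv G *ᵥ b)) →
      ENNReal.ofReal (Real.exp (4 * n)) * volume K' ≤ 2 * Φ G := by
    rintro G ⟨b, hb, hG⟩
    set F : (Fin n → ℝ) → ℝ≥0∞ :=
      K.indicator fun z => ENNReal.ofReal (Real.exp (sqNorm (unv G *ᵥ z) / 4)) with hF
    have hFm : Measurable F :=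
      (hjm.comp (measurable_prodMk_left (x := G))).indicator hKm
    have hFi : ∫⁻ z, F z = Φ G := lintegral_indicator hKm _
    set a := (1 / 2 : ℝ) • b with ha
    have ha4 : sqNorm a ≤ 1 / 4 := by rw [ha, sqNorm_smul]; linarith
    have hmem : ∀ y ∈ K', a + y ∈ K := fun y hy => by
      have := sqNorm_add_le a y
      simp only [hK, hK', Set.mem_ofPred_eq] at hy ⊢; linarith
    have hmem' : ∀ y ∈ K', a - y ∈ K := fun y hy => by
      rw [sub_eq_add_neg]
      refine hmem _ ?_
      simpa [hK', sqNorm] using hy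
    calc ENNReal.ofReal (Real.exp (4 * n)) * volume K'
        = ∫⁻ _y in K', ENNReal.ofReal (Real.exp (4 * n)) := by rw [setLIntegral_const]
      _ ≤ ∫⁻ y in K', F (a + y) + F (a - y) := by
          refine setLIntegral_mono (by fun_prop) fun y hy => ?_
          rw [hF, Set.indicator_of_mem (hmem y hy), Set.indicator_of_mem (hmem' y hy)]
          have h1 := sqNorm_add_le (unv G *ᵥ (a + y)) (unv G *ᵥ (a - y))
          rw [← mulVec_add] at h1
          have h2 : a + y + (a - y) = b := by
            rw [ha]; module
          rw [h2] at h1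
          by_cases h3 : 16 * n ≤ sqNorm (unv G *ᵥ (a + y))
          · refine le_add_right (ENNReal.ofReal_le_ofReal (Real.exp_le_exp.2 ?_)); linarith
          · refine le_add_left (ENNReal.ofReal_le_ofReal (Real.exp_le_exp.2 ?_)); linarith
      _ ≤ ∫⁻ y, F (a + y) + F (a - y) := setLIntegral_le_lintegral _ _
      _ = 2 * Φ G := by
          rw [lintegral_add_left (by fun_prop), lintegral_add_left_eq_self F,
            lintegral_sub_left_eq_self F, hFi, two_mul]
  set A := ENNReal.ofReal (Real.exp (4 * n)) * volume K' with hA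
  have hmk := mul_meas_ge_le_lintegral (μ := gau (Fin (n * n))) (hΦm.const_mul 2) A
  rw [lintegral_const_mul _ hΦm] at hmk
  have hsub : gau (Fin (n * n)) {G | ∃ b, sqNorm b ≤ 1 ∧ 64 * n < sqNorm (unv G *ᵥ b)}
      ≤ gau (Fin (n * n)) {G | A ≤ 2 * Φ G} := measure_mono fun G hG => hlow G hG
  have h1 := (mul_le_mul_right hsub A).trans (hmk.trans (mul_le_mul_right hΦi 2))
  rw [hA, hV', ← mul_assoc, ← ENNReal.ofReal_mul (Real.exp_pos _).le, mul_right_comm,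
    ← mul_assoc] at h1
  have h2 := (ENNReal.mul_le_mul_iff_left hV0 hVt).1 h1
  set P := gau (Fin (n * n)) {G | ∃ b, sqNorm b ≤ 1 ∧ 64 * n < sqNorm (unv G *ᵥ b)} with hP
  have h3 : 0 < Real.exp (4 * n) * (1 / 2) ^ n := by positivity
  rw [mul_comm, ← ENNReal.le_div_iff_mul_le (Or.inl (ENNReal.ofReal_pos.2 h3).ne') (Or.inl ENNReal.ofReal_ne_top)] at h2
  refine h2.trans (le_of_eq ?_)
  rw [show (2 : ℝ≥0∞) = ENNReal.ofReal 2 by simp, ← ENNReal.ofReal_mul (by norm_num),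
    ← ENNReal.ofReal_div_of_pos h3, Real.exp_sub]
  congr 1
  field_simp
  rw [one_div, inv_pow]
  field_simp

end

/-! ### Truncated change of measure -/

namespace QueryMaps

variable {N k t : ℕ}

lemma measurable_resp_one {Q : QueryMaps N k t} (hQ : Q.Valid) : Measurable (resp Q) := by
  have := (measurable_resp (Ω := Unit) (fun _ => Q)
    (fun j i l => (hQ.1 j i l).comp measurable_snd)).comp (measurable_prodMk_left (x := ()))
  exact this

lemma measurable_query_one {Q : QueryMaps N k t} (hQ : Q.Valid) (a : Fin N → ℝ) (j : Fin t) :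
    Measurable fun h => Q j h *ᵥ a :=
  (measurable_query (Ω := Unit) (fun _ => Q)
    (fun j i l => (hQ.1 j i l).comp measurable_snd) a j).comp (measurable_prodMk_left (x := ()))

lemma measurable_logLR_one {Q : QueryMaps N k t} (hQ : Q.Valid) (a : Fin N → ℝ) :
    Measurable (logLR Q a) := by
  have := (measurable_logLR (Ω := Unit) (fun _ => Q)
    (fun j i l => (hQ.1 j i l).comp measurable_snd) a).comp (measurable_prodMk_left (x := ()))
  exact this

lemma measurable_energy {Q : QueryMaps N k t} (hQ : Q.Valid) (a : Fin N → ℝ) :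
    Measurable fun r : Fin t → Fin k → ℝ => ∑ j, sqNorm (Q j (hist r j) *ᵥ a) :=
  Finset.measurable_sum _ fun j _ => measurable_sqNorm.comp
    ((measurable_query_one hQ a j).comp (measurable_hist j))

lemma two_mul_logLR (Q : QueryMaps N k t) (a : Fin N → ℝ) (r : Fin t → Fin k → ℝ) :
    2 * logLR Q a r = logLR Q ((2 : ℝ) • a) r + ∑ j, sqNorm (Q j (hist r j) *ᵥ a) := by
  simp only [logLR, mulVec_smul, sqNorm_smul]
  rw [Finset.mul_sum, ← Finset.sum_add_distrib]
  refine Finset.sum_congr rfl fun j _ => ?_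
  simp only [Pi.smul_apply, smul_eq_mul, mul_assoc, ← Finset.mul_sum]
  ring

/-- While the captured energy stays below `T`, the likelihood ratio has second moment at most
`exp T`, so an event that is rare for the null transcript remains rare for the planted input. -/
lemma change_of_measure {Q : QueryMaps N k t} (hQ : Q.Valid) (a : Fin N → ℝ) (T β : ℝ)
    (P : (Fin t → Fin k → ℝ) → Prop) (hP : MeasurableSet {r | P r}) :
    gau (Fin N) {G | (∑ j, sqNorm (Q j (hist (resp Q (a + G)) j) *ᵥ a) ≤ T) ∧
        P (resp Q (a + G))}
      ≤ ENNReal.ofReal (Real.exp β) * nullLaw k t {r | P r}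
        + ENNReal.ofReal (Real.exp (T - β)) := by
  set S : Set (Fin t → Fin k → ℝ) :=
    {r | (∑ j, sqNorm (Q j (hist r j) *ᵥ a) ≤ T) ∧ P r} with hS
  have hSm : MeasurableSet S :=
    (measurableSet_le (measurable_energy hQ a) measurable_const).inter hP
  have hm : Measurable fun G : Fin N → ℝ => resp Q (a + G) :=
    (measurable_resp_one hQ).comp (by fun_prop)
  have h1 : gau (Fin N) {G | (∑ j, sqNorm (Q j (hist (resp Q (a + G)) j) *ᵥ a) ≤ T) ∧
        P (resp Q (a + G))} = ∫⁻ G, S.indicator 1 (resp Q (a + G)) ∂gau (Fin N) := by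
    exact (lintegral_indicator_one (μ := gau (Fin N)) (hm hSm)).symm
  rw [h1, lintegral_resp Q hQ a _ (measurable_one.indicator hSm)]
  have h2 : ∀ r, S.indicator 1 r * ENNReal.ofReal (Real.exp (logLR Q a r))
      ≤ ENNReal.ofReal (Real.exp β) * {r | P r}.indicator 1 r
        + ENNReal.ofReal (Real.exp (T - β))
          * (1 * ENNReal.ofReal (Real.exp (logLR Q ((2 : ℝ) • a) r))) := by
    intro r
    by_cases hr : r ∈ S
    · have hr2 : r ∈ {r | P r} := hr.2
      rw [Set.indicator_of_mem hr, Set.indicator_of_mem hr2, one_mul, Pi.one_apply, one_mul,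
        mul_one, ← ENNReal.ofReal_mul (Real.exp_pos _).le, ← Real.exp_add]
      have e := two_mul_logLR Q a r
      have hr1 := hr.1
      rcases le_total (logLR Q a r) β with h | h
      · exact le_add_right (ENNReal.ofReal_le_ofReal (Real.exp_le_exp.2 h))
      · refine le_add_left (ENNReal.ofReal_le_ofReal (Real.exp_le_exp.2 ?_))
        linarith
    · rw [Set.indicator_of_notMem hr, zero_mul]; exact zero_le
  refine (lintegral_mono h2).trans ?_
  have h3 := lintegral_resp Q hQ ((2 : ℝ) • a) (fun _ => 1) measurable_const
  have hLm := measurable_logLR_one hQ ((2 : ℝ) • a)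
  rw [lintegral_add_right _ (by fun_prop), lintegral_const_mul _ (measurable_one.indicator hP),
    lintegral_indicator_one hP, lintegral_const_mul _ (by fun_prop), ← h3]
  simp

lemma avg_change_of_measure {σ : Type*} [Fintype σ] [Nonempty σ] {Q : QueryMaps N k t}
    (hQ : Q.Valid) (a : σ → Fin N → ℝ) (T L : ℝ)
    (P : σ → (Fin t → Fin k → ℝ) → Prop) (hP : ∀ s, MeasurableSet {r | P s r})
    (hL : ∀ r, (avg fun s => if P s r then (1 : ℝ≥0∞) else 0) ≤ ENNReal.ofReal (Real.exp (-L))) :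
    (avg fun s => gau (Fin N)
        {G | (∑ j, sqNorm (Q j (hist (resp Q (a s + G)) j) *ᵥ a s) ≤ T) ∧
          P s (resp Q (a s + G))})
      ≤ ENNReal.ofReal (2 * Real.exp ((T - L) / 2)) := by
  refine (avg_mono fun s => change_of_measure hQ (a s) T ((T + L) / 2) (P s) (hP s)).trans ?_
  rw [avg_add, avg_mul_left, avg_const]
  have h1 : (avg fun s => nullLaw k t {r | P s r}) ≤ ENNReal.ofReal (Real.exp (-L)) := by
    have h2 : ∀ s, nullLaw k t {r | P s r}
        = ∫⁻ r, (if P s r then (1 : ℝ≥0∞) else 0) ∂nullLaw k t := by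
      intro s
      rw [← lintegral_indicator_one (hP s)]
      refine lintegral_congr fun r => ?_
      simp [Set.indicator_apply]
    simp_rw [h2]
    rw [avg_lintegral _ _ fun s => Measurable.ite (hP s) measurable_const measurable_const]
    refine (lintegral_mono hL).trans ?_
    simp
  refine (add_le_add_left (mul_le_mul_right h1 _) _).trans ?_
  rw [← ENNReal.ofReal_mul (Real.exp_pos _).le, ← Real.exp_add,
    ← ENNReal.ofReal_add (Real.exp_pos _).le (Real.exp_pos _).le]
  refine ENNReal.ofReal_le_ofReal (le_of_eq ?_)
  rw [show (T + L) / 2 + -L = (T - L) / 2 by ring, show T - (T + L) / 2 = (T - L) / 2 by ring]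
  ring

/-- An output event `P` of conditional prior probability at most `exp (-L)` is unlikely on the
planted input: either the energy captured by some round first exceeds its threshold `τ j`, or all
thresholds are respected and `P` holds. -/
lemma avg_success {n : ℕ} (hn : 0 < n) {Q : QueryMaps (n * n) k t} (hQ : Q.Valid) (α : ℝ)
    (τ : ℕ → ℝ) (L : ℝ)
    (P : (Fin n → Bool) × (Fin n → Bool) → (Fin t → Fin k → ℝ) → Prop)
    (hP : ∀ s, MeasurableSet {r | P s r})
    (hL : ∀ r, (avg fun s => if P s r then (1 : ℝ≥0∞) else 0) ≤ ENNReal.ofReal (Real.exp (-L))) :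
    (avg fun s => gau (Fin (n * n)) {G | P s (resp Q (α • pl s + G))})
      ≤ ∑ j ∈ Finset.range t, ENNReal.ofReal (2 * Real.exp
          ((α ^ 2 * ∑ i ∈ Finset.range j, τ i - (τ j / (8 * n) - k / (2 * n))) / 2))
        + ENNReal.ofReal (2 * Real.exp ((α ^ 2 * ∑ i ∈ Finset.range t, τ i - L) / 2)) := by
  -- `E s j`: round `j` is the first to exceed its threshold
  set E : (Fin n → Bool) × (Fin n → Bool) → Fin t → Set (Fin (n * n) → ℝ) := fun s j =>
    {G | (∑ i, sqNorm (trunc Q j.2.le i (hist (resp (trunc Q j.2.le) (α • pl s + G)) i)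
        *ᵥ (α • pl s)) ≤ α ^ 2 * ∑ i ∈ Finset.range j, τ i) ∧
      τ j < sqNorm (Q j (resp (trunc Q j.2.le) (α • pl s + G)) *ᵥ pl s)} with hE
  set F : (Fin n → Bool) × (Fin n → Bool) → Set (Fin (n * n) → ℝ) := fun s =>
    {G | (∑ j, sqNorm (Q j (hist (resp Q (α • pl s + G)) j) *ᵥ (α • pl s))
        ≤ α ^ 2 * ∑ i ∈ Finset.range t, τ i) ∧ P s (resp Q (α • pl s + G))} with hF
  have hsub : ∀ s, gau (Fin (n * n)) {G | P s (resp Q (α • pl s + G))}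
      ≤ ∑ j, gau (Fin (n * n)) (E s j) + gau (Fin (n * n)) (F s) := by
    intro s
    refine (measure_mono (t := (⋃ j, E s j) ∪ F s) fun G hG => ?_).trans
      ((measure_union_le _ _).trans
        (add_le_add_left (measure_iUnion_fintype_le _ _) _))
    set ρ := resp Q (α • pl s + G) with hρ
    by_cases hbad : ∃ j : Fin t, τ j < sqNorm (Q j (hist ρ j) *ᵥ pl s)
    · left
      obtain ⟨j, hj, hmin⟩ := WellFounded.has_min (wellFounded_lt (α := Fin t))
        {j | τ j < sqNorm (Q j (hist ρ j) *ᵥ pl s)} hbad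
      refine Set.mem_iUnion.2 ⟨j, ?_, ?_⟩
      · rw [resp_trunc, ← Fin.sum_univ_eq_sum_range, Finset.mul_sum]
        refine Finset.sum_le_sum fun i _ => ?_
        rw [mulVec_smul, sqNorm_smul]
        refine mul_le_mul_of_nonneg_left ?_ (sq_nonneg _)
        by_contra hcon
        push Not at hcon
        exact hmin ⟨i.1, i.2.trans j.2⟩ hcon i.2
      · rw [resp_trunc]; exact hj
    · right
      push Not at hbad
      refine ⟨?_, hG⟩
      rw [← Fin.sum_univ_eq_sum_range, Finset.mul_sum]
      refine Finset.sum_le_sum fun i _ => ?_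
      rw [mulVec_smul, sqNorm_smul]
      exact mul_le_mul_of_nonneg_left (hbad i) (sq_nonneg _)
  refine (avg_mono hsub).trans ?_
  rw [avg_add, avg_finset_sum, ← Fin.sum_univ_eq_sum_range (fun j => ENNReal.ofReal (2 * Real.exp
          ((α ^ 2 * ∑ i ∈ Finset.range j, τ i - (τ j / (8 * n) - k / (2 * n))) / 2)))]
  refine add_le_add (Finset.sum_le_sum fun j _ => ?_) ?_
  · refine avg_change_of_measure (hQ.trunc j.2.le) (fun s => α • pl s) _ _
      (fun s r => τ j < sqNorm (Q j r *ᵥ pl s)) (fun s => ?_) fun r => ?_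
    · exact measurableSet_lt measurable_const
        (measurable_sqNorm.comp (measurable_query_one hQ (pl s) j))
    · rw [neg_sub]
      exact avg_query_tail hn (Q j r) (hQ.2.1 j r) (τ j)
  · exact avg_change_of_measure hQ (fun s => α • pl s) _ _ P hP hL

end QueryMaps

/-! ### Spectral and Schatten norms -/

section norms

variable {n : ℕ} (A : Matrix (Fin n) (Fin n) ℝ)

lemma sqNorm_mulVec_le_frobSq (x : Fin n → ℝ) : sqNorm (A *ᵥ x) ≤ frobSq A * sqNorm x := by
  rw [frobSq, Finset.sum_mul]
  exact Finset.sum_le_sum fun i _ => dot_sq_le (A i) x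

lemma bddAbove_specNorm :
    BddAbove ((fun x : Fin n → ℝ => Real.sqrt (sqNorm (A.mulVec x))) '' {x | sqNorm x ≤ 1}) := by
  refine ⟨√(frobSq A), ?_⟩
  rintro _ ⟨x, hx, rfl⟩
  exact Real.sqrt_le_sqrt ((sqNorm_mulVec_le_frobSq A x).trans
    (mul_le_of_le_one_right (frobSq_nonneg A) hx))

lemma specNorm_nonneg : 0 ≤ specNorm A :=
  Real.sSup_nonneg (by rintro _ ⟨x, -, rfl⟩; exact Real.sqrt_nonneg _)

lemma specNorm_le {c : ℝ} (hc : 0 ≤ c) (h : ∀ b, sqNorm b ≤ 1 → sqNorm (A *ᵥ b) ≤ c ^ 2) :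
    specNorm A ≤ c := by
  refine Real.sSup_le ?_ hc
  rintro _ ⟨x, hx, rfl⟩
  exact Real.sqrt_le_iff.2 ⟨hc, h x hx⟩

lemma sqNorm_mulVec_le_specNorm (x : Fin n → ℝ) :
    sqNorm (A *ᵥ x) ≤ specNorm A ^ 2 * sqNorm x := by
  rcases (sqNorm_nonneg x).eq_or_lt with h | h
  · have := sqNorm_mulVec_le_frobSq A x
    rw [← h] at this ⊢; simpa using this
  · obtain ⟨c, hc0, hc⟩ : ∃ c : ℝ, 0 < c ∧ c ^ 2 = sqNorm x :=
      ⟨√(sqNorm x), Real.sqrt_pos.2 h, Real.sq_sqrt h.le⟩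
    have h1 : sqNorm (c⁻¹ • x) ≤ 1 := by
      rw [sqNorm_smul, ← hc]; field_simp; exact le_refl _
    have h2 : √(sqNorm (A *ᵥ (c⁻¹ • x))) ≤ specNorm A :=
      le_csSup (bddAbove_specNorm A) ⟨_, h1, rfl⟩
    have h3 := (Real.sqrt_le_iff.1 h2).2
    rw [mulVec_smul, sqNorm_smul, inv_pow, hc, inv_mul_le_iff₀ h] at h3
    linarith

lemma bddBelow_singVal (i : ℕ) :
    BddBelow {c | ∃ X : Matrix (Fin n) (Fin n) ℝ, X.rank ≤ i - 1 ∧ c = specNorm (A - X)} :=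
  ⟨0, by rintro _ ⟨X, -, rfl⟩; exact specNorm_nonneg _⟩

lemma singVal_nonneg (i : ℕ) : 0 ≤ singVal A i :=
  Real.sInf_nonneg (by rintro _ ⟨X, -, rfl⟩; exact specNorm_nonneg _)

lemma singVal_le_specNorm (i : ℕ) : singVal A i ≤ specNorm A :=
  csInf_le (bddBelow_singVal A i) ⟨0, by simp, by simp⟩

lemma singVal_one : singVal A 1 = specNorm A := by
  refine le_antisymm (singVal_le_specNorm A 1) (le_csInf ⟨_, 0, by simp, rfl⟩ ?_)
  rintro _ ⟨X, hX, rfl⟩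
  have : X = 0 := by
    rw [Nat.sub_self, Nat.le_zero, Matrix.rank, Submodule.finrank_eq_zero,
      LinearMap.range_eq_bot] at hX
    ext i j
    simpa using congrFun (LinearMap.congr_fun hX (Pi.single j 1)) i
  rw [this, sub_zero]

lemma schattenNorm_nonneg (p : ℝ) : 0 ≤ schattenNorm p A :=
  Real.rpow_nonneg (Finset.sum_nonneg fun _ _ => Real.rpow_nonneg (singVal_nonneg _ _) _) _

lemma specNorm_le_schattenNorm {p : ℝ} (hp : 0 < p) (hn : 0 < n) :
    specNorm A ≤ schattenNorm p A := by
  have h1 : specNorm A ^ p ≤ ∑ i ∈ Finset.range n, singVal A (i + 1) ^ p := by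
    have := Finset.single_le_sum (f := fun i => singVal A (i + 1) ^ p)
      (fun _ _ => Real.rpow_nonneg (singVal_nonneg _ _) _) (Finset.mem_range.2 hn)
    simpa [singVal_one] using this
  have h2 := Real.rpow_le_rpow (Real.rpow_nonneg (specNorm_nonneg A) p) h1
    (one_div_pos.2 hp).le
  rwa [← Real.rpow_mul (specNorm_nonneg A), mul_one_div_cancel hp.ne', Real.rpow_one] at h2

lemma schattenNorm_le {p : ℝ} (hp : 0 < p) :
    schattenNorm p A ≤ (n : ℝ) ^ (1 / p) * specNorm A := by
  have h1 : ∑ i ∈ Finset.range n, singVal A (i + 1) ^ p ≤ n * specNorm A ^ p := by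
    refine (Finset.sum_le_sum fun i _ => Real.rpow_le_rpow (singVal_nonneg _ _)
      (singVal_le_specNorm A _) hp.le).trans ?_
    simp
  have h2 := Real.rpow_le_rpow
    (Finset.sum_nonneg fun _ _ => Real.rpow_nonneg (singVal_nonneg _ _) _) h1
    (one_div_pos.2 hp).le
  rwa [Real.mul_rpow (Nat.cast_nonneg n) (Real.rpow_nonneg (specNorm_nonneg A) p),
    ← Real.rpow_mul (specNorm_nonneg A), mul_one_div_cancel hp.ne', Real.rpow_one] at h2

end norms

lemma unv_add {n : ℕ} (x y : Fin (n * n) → ℝ) : unv (x + y) = unv x + unv y := rfl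

lemma unv_smul_pl {n : ℕ} (α : ℝ) (s : (Fin n → Bool) × (Fin n → Bool)) :
    unv (α • pl s) = vecMulVec (α • sgn s.1) (sgn s.2) := by
  ext i j; simp [unv, pl, vecMulVec_apply, mul_assoc]

/-- A matrix that is within factor two of the best rank-`r` approximation of the planted input
must be close to the plant itself, because the plant is a competitor leaving only the noise. -/
lemma close_of_success {n r : ℕ} (hn : 0 < n) (hr : 1 ≤ r) {p : ℝ} (hp : 2 ≤ p) (α : ℝ)
    (s : (Fin n → Bool) × (Fin n → Bool)) (G : Fin (n * n) → ℝ)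
    (hG : ∀ b, sqNorm b ≤ 1 → sqNorm (unv G *ᵥ b) ≤ 64 * n) (B : Matrix (Fin n) (Fin n) ℝ)
    (hB : schattenNorm p (unv (α • pl s + G) - B) ≤ 2 * sInf {c' | ∃ X : Matrix (Fin n) (Fin n) ℝ,
      X.rank ≤ r ∧ c' = schattenNorm p (unv (α • pl s + G) - X)}) :
    sqNorm ((α * n) • sgn s.1 - B *ᵥ sgn s.2) ≤ 640 * (n : ℝ) ^ (2 / p) * n ^ 2 := by
  have hp0 : 0 < p := by linarith
  have hn1 : (1 : ℝ) ≤ n := by exact_mod_cast hn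
  have hGs : specNorm (unv G) ≤ 8 * √n := by
    refine specNorm_le _ (by positivity) fun b hb => (hG b hb).trans (le_of_eq ?_)
    rw [mul_pow, Real.sq_sqrt (by positivity)]; norm_num
  have hopt : sInf {c' | ∃ X : Matrix (Fin n) (Fin n) ℝ,
      X.rank ≤ r ∧ c' = schattenNorm p (unv (α • pl s + G) - X)} ≤ schattenNorm p (unv G) := by
    refine csInf_le ⟨0, by rintro _ ⟨X, -, rfl⟩; exact schattenNorm_nonneg _ _⟩
      ⟨unv (α • pl s), ?_, ?_⟩
    · rw [unv_smul_pl]; exact (rank_vecMulVec_le _ _).trans hr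
    · rw [unv_add, add_sub_cancel_left]
  set θ : ℝ := (n : ℝ) ^ (1 / p) with hθ
  have hθ1 : 1 ≤ θ := Real.one_le_rpow hn1 (by positivity)
  have hθ2 : (n : ℝ) ^ (2 / p) = θ ^ 2 := by
    rw [hθ, ← Real.rpow_natCast, ← Real.rpow_mul (by positivity)]; congr 1; push_cast; ring
  have hs : specNorm (unv (α • pl s + G) - B) ≤ 2 * (θ * (8 * √n)) :=
    calc _ ≤ _ := specNorm_le_schattenNorm _ hp0 hn
      _ ≤ _ := hB
      _ ≤ 2 * schattenNorm p (unv G) := by linarith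
      _ ≤ 2 * (θ * specNorm (unv G)) := by linarith [schattenNorm_le (unv G) hp0]
      _ ≤ _ := by gcongr
  have hs2 : specNorm (unv (α • pl s + G) - B) ^ 2 ≤ 256 * θ ^ 2 * n := by
    refine (pow_le_pow_left₀ (specNorm_nonneg _) hs 2).trans (le_of_eq ?_)
    have := Real.sq_sqrt (show (0 : ℝ) ≤ n by positivity)
    calc _ = 256 * θ ^ 2 * √n ^ 2 := by ring
      _ = _ := by rw [this]
  have hG2 : specNorm (unv G) ^ 2 ≤ 64 * n := by
    refine (pow_le_pow_left₀ (specNorm_nonneg _) hGs 2).trans (le_of_eq ?_)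
    rw [mul_pow, Real.sq_sqrt (by positivity)]; norm_num
  have e : (α * n) • sgn s.1 - B *ᵥ sgn s.2
      = (unv (α • pl s + G) - B) *ᵥ sgn s.2 + unv G *ᵥ (-sgn s.2) := by
    have h1 : vecMulVec (α • sgn s.1) (sgn s.2) *ᵥ sgn s.2 = (α * n) • sgn s.1 := by
      funext i
      have : ∑ j, sgn s.2 j * sgn s.2 j = n := by
        simpa [sqNorm, sq] using sqNorm_sgn s.2
      simp only [mulVec, dotProduct, vecMulVec_apply, mul_assoc, ← Finset.mul_sum, this,
        Pi.smul_apply, smul_eq_mul]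
      ring
    rw [unv_add, unv_smul_pl, sub_mulVec, add_mulVec, h1, mulVec_neg]
    abel
  rw [e, hθ2]
  refine (sqNorm_add_le _ _).trans ?_
  have a1 := sqNorm_mulVec_le_specNorm (unv (α • pl s + G) - B) (sgn s.2)
  have a2 := sqNorm_mulVec_le_specNorm (unv G) (-sgn s.2)
  have a3 : sqNorm (-sgn s.2) = n := by rw [← sqNorm_sgn s.2]; simp [sqNorm]
  rw [sqNorm_sgn] at a1
  rw [a3] at a2
  have b1 : specNorm (unv (α • pl s + G) - B) ^ 2 * n ≤ 256 * θ ^ 2 * n * n := by gcongr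
  have b2 : specNorm (unv G) ^ 2 * n ≤ 64 * n * n := by gcongr
  have b3 : 64 * (n : ℝ) * n ≤ 64 * θ ^ 2 * (n * n) := by
    have : (1 : ℝ) ≤ θ ^ 2 := one_le_pow₀ hθ1
    nlinarith [mul_nonneg (Nat.cast_nonneg n : (0 : ℝ) ≤ n) (Nat.cast_nonneg n : (0 : ℝ) ≤ n)]
  nlinarith

lemma measurableSet_rank_le {n : ℕ} (r : ℕ) :
    MeasurableSet {M : Fin n → Fin n → ℝ | (Matrix.of M).rank ≤ r} := by
  have h := isOpen_setOfPred_nat_le_rank (𝕜 := ℝ) (E := Fin n → ℝ) (F := Fin n → ℝ) (r + 1)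
  let e : (Fin n → Fin n → ℝ) →ₗ[ℝ] ((Fin n → ℝ) →L[ℝ] (Fin n → ℝ)) :=
    LinearMap.toContinuousLinearMap.toLinearMap ∘ₗ (Matrix.toLin' : Matrix (Fin n) (Fin n) ℝ ≃ₗ[ℝ] _).toLinearMap
  have he : Continuous e := LinearMap.continuous_of_finiteDimensional e
  have h2 := (h.preimage he).measurableSet.compl
  convert h2 using 1
  ext M
  have : LinearMap.rank ((e M : (Fin n → ℝ) →L[ℝ] (Fin n → ℝ)) : (Fin n → ℝ) →ₗ[ℝ] (Fin n → ℝ))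
      = ((Matrix.of M).rank : Cardinal) := by
    rw [Matrix.rank, Module.finrank_eq_rank]
    rfl
  simp only [Set.mem_compl_iff, Set.mem_preimage, Set.mem_ofPred_eq, this, Nat.cast_le]
  omega

/-! ### The lower bound -/

lemma sum_pow_succ_le {R : ℝ} (hR : 2 ≤ R) (j : ℕ) :
    ∑ i ∈ Finset.range j, R ^ (i + 1) ≤ 2 * R ^ j := by
  induction j with
  | zero => simp
  | succ j ih =>
    rw [Finset.sum_range_succ]
    have : (0 : ℝ) ≤ R ^ j := by positivity
    rw [pow_succ] at *
    nlinarith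

lemma exp_neg_five_le : Real.exp (-5) ≤ 1 / 100 := by
  rw [Real.exp_neg, inv_le_comm₀ (Real.exp_pos _) (by norm_num)]
  have h := Real.exp_one_gt_d9.le
  have : Real.exp 5 = Real.exp 1 ^ 5 := by rw [← Real.exp_nat_mul]; norm_num
  rw [this]
  refine le_trans ?_ (pow_le_pow_left₀ (by norm_num) h 5)
  norm_num

lemma sum_geom_le (t : ℕ) : ∑ j ∈ Finset.range t, 2 * (1 / 100 : ℝ) ^ (j + 1) ≤ 1 / 10 := by
  have : ∑ j ∈ Finset.range t, 2 * (1 / 100 : ℝ) ^ (j + 1) ≤ 1 / 10 - (1 / 10) * (1 / 100) ^ t := by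
    induction t with
    | zero => simp
    | succ t ih =>
      rw [Finset.sum_range_succ]
      have : (0 : ℝ) ≤ (1 / 100) ^ t := by positivity
      rw [pow_succ]
      nlinarith
  have h : (0 : ℝ) ≤ (1 / 100) ^ t := by positivity
  linarith

/-- Growth factor of the energy thresholds from one round to the next. -/
def growth (n : ℕ) (p : ℝ) : ℝ := 163840 * (n : ℝ) ^ (2 / p)

lemma growth_ge {n : ℕ} (hn : 0 < n) {p : ℝ} (hp : 2 ≤ p) : 163840 ≤ growth n p := by
  have hn1 : (1 : ℝ) ≤ n := by exact_mod_cast hn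
  have : (1 : ℝ) ≤ (n : ℝ) ^ (2 / p) := Real.one_le_rpow hn1 (by positivity)
  unfold growth; linarith

/-- A deterministic algorithm with too few rounds rarely outputs a low-rank matrix close to the
plant. With signal strength `α² n = growth / 64`, the thresholds `k * growth ^ (j + 1)` make every
exponent in `QueryMaps.avg_success` negative. -/
lemma per_seed {n r k t : ℕ} {p : ℝ} (hn : 200 ≤ n) (hr : 1 ≤ r) (hp : 2 ≤ p) (hk : n * r ≤ k)
    (hR : growth n p ^ (t + 1) * k ≤ (n : ℝ) ^ 2) {Q : QueryMaps (n * n) k t} (hQ : Q.Valid)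
    (out : (Fin t → Fin k → ℝ) → Matrix (Fin n) (Fin n) ℝ)
    (hout : ∀ i j, Measurable fun h => out h i j) {α : ℝ} (hα : 0 < α)
    (hα2 : α ^ 2 * n = growth n p / 64) :
    (avg fun s : (Fin n → Bool) × (Fin n → Bool) => gau (Fin (n * n))
        {G | (out (QueryMaps.resp Q (α • pl s + G))).rank ≤ r ∧
          sqNorm ((α * n) • sgn s.1 - out (QueryMaps.resp Q (α • pl s + G)) *ᵥ sgn s.2)
            ≤ 640 * (n : ℝ) ^ (2 / p) * n ^ 2}) ≤ ENNReal.ofReal (2 / 10) := by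
  have hn0 : 0 < n := by omega
  have hn' : (200 : ℝ) ≤ n := by exact_mod_cast hn
  have hnp : (0 : ℝ) < n := by linarith
  have hRge := growth_ge hn0 hp
  set R := growth n p with hRdef
  have hkn : (n : ℝ) ≤ k := by
    have : n * 1 ≤ k := (Nat.mul_le_mul_left n hr).trans hk
    exact_mod_cast (by omega : n ≤ k)
  have hk0 : (0 : ℝ) < k := by linarith
  have hrk : (n : ℝ) * r ≤ k := by exact_mod_cast hk
  have hr8 : 8 * r ≤ n := by
    have h1 : R ≤ R ^ (t + 1) := le_self_pow₀ (by linarith) (by omega)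
    have h2 : R * (n * r) ≤ (n : ℝ) ^ 2 :=
      (mul_le_mul h1 hrk (by positivity) (by positivity)).trans hR
    have h3 : n * (8 * r : ℝ) ≤ n * n := by
      have : (0 : ℝ) ≤ n * r := by positivity
      nlinarith
    exact_mod_cast le_of_mul_le_mul_left h3 hnp
  have hmain := QueryMaps.avg_success hn0 hQ α (fun j => k * R ^ (j + 1)) (n / 8)
    (fun s h => (out h).rank ≤ r ∧
      sqNorm ((α * n) • sgn s.1 - out h *ᵥ sgn s.2) ≤ 640 * (n : ℝ) ^ (2 / p) * n ^ 2) ?_ ?_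
  · refine hmain.trans ?_
    have hT : ∀ j, α ^ 2 * ∑ i ∈ Finset.range j, k * R ^ (i + 1) ≤ k / n * R ^ (j + 1) / 32 := by
      intro j
      have h1 : α ^ 2 = R / 64 / n := by rw [← hα2]; field_simp
      rw [← Finset.mul_sum, h1]
      calc R / 64 / n * (k * ∑ i ∈ Finset.range j, R ^ (i + 1))
          ≤ R / 64 / n * (k * (2 * R ^ j)) := by
            have := sum_pow_succ_le (by linarith : (2 : ℝ) ≤ R) j
            gcongr
        _ = _ := by rw [pow_succ]; ring
    have hκ : 1 ≤ (k : ℝ) / n := by rwa [one_le_div hnp]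
    have h1 : ∀ j ∈ Finset.range t, ENNReal.ofReal (2 * Real.exp
          ((α ^ 2 * ∑ i ∈ Finset.range j, k * R ^ (i + 1)
            - (k * R ^ (j + 1) / (8 * n) - k / (2 * n))) / 2))
        ≤ ENNReal.ofReal (2 * (1 / 100) ^ (j + 1)) := by
      intro j _
      refine ENNReal.ofReal_le_ofReal (mul_le_mul_of_nonneg_left ?_ (by norm_num))
      refine le_trans (Real.exp_le_exp.2 (?_ : _ ≤ ((j + 1 : ℕ) : ℝ) * (-5))) ?_
      · have h2 := hT j
        have h3 : (k * R ^ (j + 1) / (8 * n) - k / (2 * n) : ℝ)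
            = k / n * (R ^ (j + 1) / 8 - 1 / 2) := by field_simp
        rw [h3]
        have h4 : 1 + ((j + 1 : ℕ) : ℝ) * (R - 1) ≤ R ^ (j + 1) := by
          have := one_add_mul_le_pow (a := R - 1) (by linarith) (j + 1)
          rwa [add_sub_cancel] at this
        have hj0 : (1 : ℝ) ≤ ((j + 1 : ℕ) : ℝ) := by push_cast; linarith [Nat.cast_nonneg (α := ℝ) j]
        have h5 : ((j + 1 : ℕ) : ℝ) * 163839 ≤ R ^ (j + 1) := by nlinarith
        have h6 : (0 : ℝ) ≤ R ^ (j + 1) * 3 / 32 - 1 / 2 := by linarith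
        have h7 : R ^ (j + 1) * 3 / 32 - 1 / 2 ≤ k / n * (R ^ (j + 1) * 3 / 32 - 1 / 2) := by
          nlinarith
        linarith
      · rw [Real.exp_nat_mul]
        exact pow_le_pow_left₀ (Real.exp_pos _).le exp_neg_five_le _
    have h2 : ENNReal.ofReal (2 * Real.exp
          ((α ^ 2 * ∑ i ∈ Finset.range t, k * R ^ (i + 1) - n / 8) / 2))
        ≤ ENNReal.ofReal (1 / 10) := by
      refine ENNReal.ofReal_le_ofReal ?_
      have h3 := hT t
      have h4 : k / n * R ^ (t + 1) ≤ (n : ℝ) := by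
        rw [div_mul_eq_mul_div, div_le_iff₀ hnp]; nlinarith
      have h5 : Real.exp ((α ^ 2 * ∑ i ∈ Finset.range t, k * R ^ (i + 1) - n / 8) / 2)
          ≤ Real.exp (-5) := Real.exp_le_exp.2 (by linarith)
      linarith [exp_neg_five_le]
    refine (add_le_add (Finset.sum_le_sum h1) h2).trans ?_
    rw [← ENNReal.ofReal_sum_of_nonneg fun _ _ => by positivity,
      ← ENNReal.ofReal_add (Finset.sum_nonneg fun _ _ => by positivity) (by norm_num)]
    refine ENNReal.ofReal_le_ofReal ?_
    linarith [sum_geom_le t]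
  · intro s
    have hm : Measurable (fun h i j => out h i j : (Fin t → Fin k → ℝ) → Fin n → Fin n → ℝ) :=
      measurable_pi_iff.2 fun i => measurable_pi_iff.2 fun j => hout i j
    have hs : Measurable fun h => sqNorm ((α * n) • sgn s.1 - out h *ᵥ sgn s.2) := by
      refine QueryMaps.measurable_sqNorm.comp (measurable_pi_iff.2 fun i => ?_)
      simp only [Pi.sub_apply, mulVec, dotProduct]
      exact measurable_const.sub (Finset.measurable_sum _ fun j _ => (hout i j).mul_const _)
    have h2 := measurableSet_le hs (measurable_const (a := 640 * (n : ℝ) ^ (2 / p) * n ^ 2))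
    exact (hm (measurableSet_rank_le r)).inter h2
  · intro h
    by_cases hrk' : (out h).rank ≤ r
    · simp only [hrk', true_and]
      refine avg_output hr8 hn0 (out h) hrk' α _ hα (le_of_eq ?_)
      have : α ^ 2 * n ^ 3 / 4 = α ^ 2 * n * n ^ 2 / 4 := by ring
      rw [this, hα2, hRdef, growth]; ring
    · simp [hrk', avg]

lemma opNorm_bad_le {n : ℕ} (hn : 200 ≤ n) :
    gau (Fin (n * n)) {G | ∃ b, sqNorm b ≤ 1 ∧ 64 * n < sqNorm (unv G *ᵥ b)}
      ≤ ENNReal.ofReal (1 / 10) := by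
  refine gau_opNorm.trans (ENNReal.ofReal_le_ofReal ?_)
  have hn' : (200 : ℝ) ≤ n := by exact_mod_cast hn
  have h2 : (2 : ℝ) ^ n ≤ Real.exp n := by
    rw [← mul_one (n : ℝ), Real.exp_nat_mul]
    exact pow_le_pow_left₀ (by norm_num) (by linarith [Real.exp_one_gt_d9]) n
  have h3 : Real.exp n * Real.exp (n / 2 - 4 * n) ≤ Real.exp (-5) := by
    rw [← Real.exp_add]; exact Real.exp_le_exp.2 (by linarith)
  have h4 := exp_neg_five_le
  have h5 := mul_le_mul_of_nonneg_right h2 (Real.exp_pos (n / 2 - 4 * n)).le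
  linarith

/-- Averaging the success guarantee over the plant and the noise contradicts `per_seed` when
the number of rounds is too small. -/
lemma growth_bound {n r k t : ℕ} {p : ℝ} (hn : 200 ≤ n) (hr : 1 ≤ r) (hp : 2 ≤ p) (hk : n * r ≤ k)
    (Ω : Type) [MeasurableSpace Ω] (μ : Measure Ω) [IsProbabilityMeasure μ]
    (Qf : Ω → QueryMaps (n * n) k t)
    (out : Ω → (Fin t → Fin k → ℝ) → Matrix (Fin n) (Fin n) ℝ)
    (hQ : ∀ ω, (Qf ω).Valid)
    (hQm : ∀ (j : Fin t) (i : Fin k) (l : Fin (n * n)),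
            Measurable fun p : Ω × (Fin (j : ℕ) → Fin k → ℝ) => Qf p.1 j p.2 i l)
    (hout : ∀ i j : Fin n,
            Measurable fun p : Ω × (Fin t → Fin k → ℝ) => out p.1 p.2 i j)
    (hsucc : ∀ A : Matrix (Fin n) (Fin n) ℝ,
            (99 / 100 : ℝ≥0∞) ≤
              μ {ω | (out ω (QueryMaps.resp (Qf ω) (_root_.vec n A))).rank ≤ r ∧
                    schattenNorm p (A - out ω (QueryMaps.resp (Qf ω) (_root_.vec n A)))
                      ≤ 2 * sInf {c' | ∃ X : Matrix (Fin n) (Fin n) ℝ,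
                          X.rank ≤ r ∧ c' = schattenNorm p (A - X)}}) :
    (n : ℝ) ^ 2 < growth n p ^ (t + 1) * k := by
  by_contra hcon
  push Not at hcon
  have hn0 : 0 < n := by omega
  have hnp : (0 : ℝ) < n := by exact_mod_cast hn0
  have hRge := growth_ge hn0 hp
  obtain ⟨α, hα, hα2⟩ : ∃ α : ℝ, 0 < α ∧ α ^ 2 * n = growth n p / 64 := by
    have : 0 < growth n p / 64 / n := by positivity
    refine ⟨√(growth n p / 64 / n), Real.sqrt_pos.2 this, ?_⟩
    rw [Real.sq_sqrt this.le]; field_simp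
  set γ := gau (Fin (n * n)) with hγ
  set Bad : Set (Fin (n * n) → ℝ) :=
    {G | ∃ b, sqNorm b ≤ 1 ∧ 64 * n < sqNorm (unv G *ᵥ b)} with hBad
  set Z : (Fin n → Bool) × (Fin n → Bool) → Set (Ω × (Fin (n * n) → ℝ)) := fun s =>
    {q | (out q.1 (QueryMaps.resp (Qf q.1) (α • pl s + q.2))).rank ≤ r ∧
          sqNorm ((α * n) • sgn s.1
            - out q.1 (QueryMaps.resp (Qf q.1) (α • pl s + q.2)) *ᵥ sgn s.2)
            ≤ 640 * (n : ℝ) ^ (2 / p) * n ^ 2} with hZ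
  have hZm : ∀ s, MeasurableSet (Z s) := by
    intro s
    have hr1 : Measurable fun q : Ω × (Fin (n * n) → ℝ) =>
        QueryMaps.resp (Qf q.1) (α • pl s + q.2) :=
      (QueryMaps.measurable_resp Qf hQm).comp
        (f := fun q : Ω × (Fin (n * n) → ℝ) => (q.1, α • pl s + q.2)) (by fun_prop)
    have he : ∀ i j, Measurable fun q : Ω × (Fin (n * n) → ℝ) =>
        out q.1 (QueryMaps.resp (Qf q.1) (α • pl s + q.2)) i j := fun i j =>
      (hout i j).comp (measurable_fst.prodMk hr1)
    have hm : Measurable (fun q i j => out q.1 (QueryMaps.resp (Qf q.1) (α • pl s + q.2)) i j :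
        Ω × (Fin (n * n) → ℝ) → Fin n → Fin n → ℝ) :=
      measurable_pi_iff.2 fun i => measurable_pi_iff.2 fun j => he i j
    have hs : Measurable fun q : Ω × (Fin (n * n) → ℝ) => sqNorm ((α * n) • sgn s.1
        - out q.1 (QueryMaps.resp (Qf q.1) (α • pl s + q.2)) *ᵥ sgn s.2) := by
      refine QueryMaps.measurable_sqNorm.comp (measurable_pi_iff.2 fun i => ?_)
      simp only [Pi.sub_apply, mulVec, dotProduct]
      exact measurable_const.sub (Finset.measurable_sum _ fun j _ => (he i j).mul_const _)
    have h2 := measurableSet_le hs (measurable_const (a := 640 * (n : ℝ) ^ (2 / p) * n ^ 2))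
    exact (hm (measurableSet_rank_le r)).inter h2
  have hpt : ∀ s G, (99 / 100 : ℝ≥0∞)
      ≤ (toMeasurable γ Bad).indicator 1 G + μ ((fun ω => (ω, G)) ⁻¹' Z s) := by
    intro s G
    by_cases hG : G ∈ toMeasurable γ Bad
    · rw [Set.indicator_of_mem hG]
      refine le_add_right (ENNReal.div_le_of_le_mul ?_)
      norm_num
    · have hG' : ∀ b, sqNorm b ≤ 1 → sqNorm (unv G *ᵥ b) ≤ 64 * n := by
        intro b hb
        by_contra hc
        push Not at hc
        exact hG (subset_toMeasurable γ Bad ⟨b, hb, hc⟩)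
      refine le_add_left ((hsucc (unv (α • pl s + G))).trans (measure_mono fun ω hω => ?_))
      rw [vec_unv] at hω
      exact ⟨hω.1, close_of_success hn0 hr hp α s G hG' _ hω.2⟩
  have hsum : ∀ s, (99 / 100 : ℝ≥0∞) ≤ γ Bad + ∫⁻ ω, γ (Prod.mk ω ⁻¹' Z s) ∂μ := by
    intro s
    have h1 := lintegral_mono (μ := γ) (hpt s)
    rw [lintegral_const, measure_univ, mul_one,
      lintegral_add_left (measurable_one.indicator (measurableSet_toMeasurable γ Bad)),
      lintegral_indicator_one (measurableSet_toMeasurable γ Bad), measure_toMeasurable] at h1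
    rwa [← Measure.prod_apply_symm (hZm s), Measure.prod_apply (hZm s)] at h1
  have havg := avg_mono hsum
  rw [avg_const, avg_add, avg_const, avg_lintegral _ _ fun s => measurable_measure_prodMk_left (hZm s)] at havg
  have hfin : ∫⁻ ω, avg (fun s => γ (Prod.mk ω ⁻¹' Z s)) ∂μ ≤ ENNReal.ofReal (2 / 10) := by
    refine (lintegral_mono fun ω => per_seed hn hr hp hk hcon (hQ ω) (out ω)
      (fun i j => (hout i j).comp measurable_prodMk_left) hα hα2).trans ?_
    simp
  have h := havg.trans (add_le_add (opNorm_bad_le hn) hfin)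
  rw [← ENNReal.ofReal_add (by norm_num) (by norm_num)] at h
  have h99 : (99 / 100 : ℝ≥0∞) = ENNReal.ofReal (99 / 100) := by
    rw [ENNReal.ofReal_div_of_pos (by norm_num)]; simp
  rw [h99, ENNReal.ofReal_le_ofReal_iff (by norm_num)] at h
  norm_num at h

/-- Without any measurement the output is a random matrix independent of the input, which
cannot be exact with probability `99 / 100` on two different matrices of rank at most one. -/
lemma rounds_pos {n r k t : ℕ} {p : ℝ} (hn : 0 < n) (hr : 1 ≤ r) (hp : 2 ≤ p)
    (Ω : Type) [MeasurableSpace Ω] (μ : Measure Ω) [IsProbabilityMeasure μ]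
    (Qf : Ω → QueryMaps (n * n) k t)
    (out : Ω → (Fin t → Fin k → ℝ) → Matrix (Fin n) (Fin n) ℝ)
    (hout : ∀ i j : Fin n,
            Measurable fun p : Ω × (Fin t → Fin k → ℝ) => out p.1 p.2 i j)
    (hsucc : ∀ A : Matrix (Fin n) (Fin n) ℝ,
            (99 / 100 : ℝ≥0∞) ≤
              μ {ω | (out ω (QueryMaps.resp (Qf ω) (_root_.vec n A))).rank ≤ r ∧
                    schattenNorm p (A - out ω (QueryMaps.resp (Qf ω) (_root_.vec n A)))
                      ≤ 2 * sInf {c' | ∃ X : Matrix (Fin n) (Fin n) ℝ,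
                          X.rank ≤ r ∧ c' = schattenNorm p (A - X)}}) : 1 ≤ t := by
  by_contra ht
  have ht0 : t = 0 := by omega
  subst ht0
  have hp0 : 0 < p := by linarith
  let i₀ : Fin n := ⟨0, hn⟩
  -- exact recovery of one entry on inputs whose optimum is zero
  have hexact : ∀ A : Matrix (Fin n) (Fin n) ℝ, A.rank ≤ r →
      (99 / 100 : ℝ≥0∞) ≤ μ {ω | out ω Fin.elim0 i₀ i₀ = A i₀ i₀} := by
    intro A hA
    refine (hsucc A).trans (measure_mono fun ω hω => ?_)
    have h0 := hω.2
    rw [show QueryMaps.resp (Qf ω) (_root_.vec n A) = Fin.elim0 from Subsingleton.elim _ _] at h0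
    set B := out ω Fin.elim0 with hB
    have hz : specNorm (0 : Matrix (Fin n) (Fin n) ℝ) ≤ 0 :=
      specNorm_le _ le_rfl fun b _ => by simp [sqNorm]
    have hopt : sInf {c' | ∃ X : Matrix (Fin n) (Fin n) ℝ,
        X.rank ≤ r ∧ c' = schattenNorm p (A - X)} ≤ 0 := by
      refine le_trans (csInf_le (a := schattenNorm p (A - A))
        ⟨0, by rintro _ ⟨X, -, rfl⟩; exact schattenNorm_nonneg _ _⟩ ⟨A, hA, rfl⟩) ?_
      rw [sub_self]
      refine (schattenNorm_le _ hp0).trans ?_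
      exact mul_nonpos_of_nonneg_of_nonpos (by positivity) hz
    have h1 : specNorm (A - B) = 0 :=
      le_antisymm ((specNorm_le_schattenNorm _ hp0 hn).trans (by linarith)) (specNorm_nonneg _)
    have h2 := sqNorm_mulVec_le_specNorm (A - B) (Pi.single i₀ 1)
    rw [h1] at h2
    have h3 : ((A - B) *ᵥ Pi.single i₀ 1) i₀ ^ 2 ≤ 0 := by
      refine (Finset.single_le_sum (f := fun i => ((A - B) *ᵥ Pi.single i₀ 1) i ^ 2)
        (fun _ _ => sq_nonneg _) (Finset.mem_univ i₀)).trans (h2.trans (by simp))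
    have h4 := pow_eq_zero_iff two_ne_zero |>.1 (le_antisymm h3 (sq_nonneg _))
    simp at h4
    exact (sub_eq_zero.1 h4).symm
  have hm : Measurable fun ω => out ω Fin.elim0 i₀ i₀ :=
    (hout i₀ i₀).comp measurable_prodMk_right
  have h0 := hexact 0 (by simp)
  have h1 := hexact (vecMulVec (fun _ => 1) (fun _ => 1)) ((rank_vecMulVec_le _ _).trans hr)
  simp only [vecMulVec_apply, mul_one, Matrix.zero_apply] at h0 h1
  have hd : Disjoint {ω | out ω Fin.elim0 i₀ i₀ = 0} {ω | out ω Fin.elim0 i₀ i₀ = 1} := by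
    rw [Set.disjoint_left]
    intro ω (ha : _ = _) (hb : _ = _)
    rw [ha] at hb; norm_num at hb
  have h2 := measure_union (μ := μ) hd (hm (measurableSet_singleton 1))
  have h3 : μ ({ω | out ω Fin.elim0 i₀ i₀ = 0} ∪ {ω | out ω Fin.elim0 i₀ i₀ = 1}) ≤ 1 :=
    prob_le_one
  rw [h2] at h3
  have h4 := (add_le_add h0 h1).trans h3
  have h99 : (99 / 100 : ℝ≥0∞) = ENNReal.ofReal (99 / 100) := by
    rw [ENNReal.ofReal_div_of_pos (by norm_num)]; simp
  rw [h99, ← ENNReal.ofReal_add (by norm_num) (by norm_num), ← ENNReal.ofReal_one,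
    ENNReal.ofReal_le_ofReal_iff (by norm_num)] at h4
  norm_num at h4

lemma log_growth_le {n : ℕ} (hn : 0 < n) {p : ℝ} (hp : 2 ≤ p) :
    Real.log (growth n p) ≤ 13 * (1 + (1 / p) * Real.log n) := by
  have hnp : (0 : ℝ) < n := by exact_mod_cast hn
  have hn1 : (1 : ℝ) ≤ n := by exact_mod_cast hn
  rw [growth, Real.log_mul (by norm_num) (Real.rpow_pos_of_pos hnp _).ne', Real.log_rpow hnp]
  have h1 : Real.log 163840 ≤ 13 := by
    rw [Real.log_le_iff_le_exp (by norm_num)]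
    have : Real.exp 13 = Real.exp 1 ^ 13 := by rw [← Real.exp_nat_mul]; norm_num
    rw [this]
    refine le_trans ?_ (pow_le_pow_left₀ (by norm_num) Real.exp_one_gt_d9.le 13)
    norm_num
  have h2 : 0 ≤ (1 / p) * Real.log n := mul_nonneg (by positivity) (Real.log_nonneg hn1)
  have h3 : 2 / p * Real.log n = 2 * ((1 / p) * Real.log n) := by ring
  rw [h3]; linarith

/-- Round lower bound for 2-approximate Schatten-`p` norm low-rank approximation. -/
theorem schatten_LRA_round_lower_bound :
    ∃ (c : ℝ) (n₀ : ℕ), 0 < c ∧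
      ∀ (n r k t : ℕ) (p : ℝ), n₀ ≤ n → 1 ≤ r → 2 ≤ p → n * r ≤ k → k ≤ n ^ 2 →
      ∀ (Ω : Type) [MeasurableSpace Ω] (μ : Measure Ω) [IsProbabilityMeasure μ]
        (Qf : Ω → QueryMaps (n * n) k t)
        (out : Ω → (Fin t → Fin k → ℝ) → Matrix (Fin n) (Fin n) ℝ),
        (∀ ω, (Qf ω).Valid) →
        (∀ (j : Fin t) (i : Fin k) (l : Fin (n * n)),
            Measurable fun p : Ω × (Fin (j : ℕ) → Fin k → ℝ) => Qf p.1 j p.2 i l) →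
        (∀ i j : Fin n,
            Measurable fun p : Ω × (Fin t → Fin k → ℝ) => out p.1 p.2 i j) →
        (∀ A : Matrix (Fin n) (Fin n) ℝ,
            (99 / 100 : ℝ≥0∞) ≤
              μ {ω | (out ω (QueryMaps.resp (Qf ω) (vec n A))).rank ≤ r ∧
                    schattenNorm p (A - out ω (QueryMaps.resp (Qf ω) (vec n A)))
                      ≤ 2 * sInf {c' | ∃ X : Matrix (Fin n) (Fin n) ℝ,
                          X.rank ≤ r ∧ c' = schattenNorm p (A - X)}}) →
        c * (Real.log ((n : ℝ) ^ 2 / k) /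
            (1 + (1 / p) * Real.log n + Real.log (Real.log n))) ≤ (t : ℝ) := by
  refine ⟨1 / 26, 200, by norm_num, ?_⟩
  intro n r k t p hn hr hp hk _ Ω _ μ _ Qf out hQ hQm hout hsucc
  have hn0 : 0 < n := by omega
  have hnp : (200 : ℝ) ≤ n := by exact_mod_cast hn
  have ht := rounds_pos hn0 hr hp Ω μ Qf out hout hsucc
  have hgrow := growth_bound hn hr hp hk Ω μ Qf out hQ hQm hout hsucc
  have hRge := growth_ge hn0 hp
  have hk0 : (0 : ℝ) < k := by
    have : 0 < k := (Nat.mul_pos hn0 hr).trans_le hk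
    exact_mod_cast this
  have hlogn : 1 ≤ Real.log n := by
    rw [Real.le_log_iff_exp_le (by linarith)]
    linarith [Real.exp_one_lt_d9]
  have hll : 0 ≤ Real.log (Real.log n) := Real.log_nonneg hlogn
  have h0 : 0 ≤ (1 / p) * Real.log n := mul_nonneg (by positivity) (by linarith)
  have ht' : (1 : ℝ) ≤ t := by exact_mod_cast ht
  have h1 : Real.log ((n : ℝ) ^ 2 / k) ≤ (t + 1) * Real.log (growth n p) := by
    have h2 : (n : ℝ) ^ 2 / k ≤ growth n p ^ (t + 1) := by
      rw [div_le_iff₀ hk0]; exact hgrow.le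
    have h3 := Real.log_le_log (by positivity) h2
    rw [Real.log_pow] at h3
    exact_mod_cast h3
  have h2 := log_growth_le hn0 hp
  have h3 : Real.log ((n : ℝ) ^ 2 / k)
      ≤ 26 * t * (1 + (1 / p) * Real.log n + Real.log (Real.log n)) := by
    have h4 : (t + 1) * Real.log (growth n p) ≤ 2 * t * (13 * (1 + (1 / p) * Real.log n)) := by
      refine mul_le_mul (by linarith) h2 (Real.log_nonneg (by linarith)) (by positivity)
    have h5 : (0 : ℝ) ≤ t * Real.log (Real.log n) := by positivity
    nlinarith
  rw [one_div_mul_eq_div, div_div, div_le_iff₀ (by linarith)]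
  linarith

end
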